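/- Let 𝕏 = (X,Σ_X,𝔪_X) and 𝕐 = (Y,Σ_Y,𝔪_Y) be separable σ-finite measure spaces, and φ : X → Y a measurable map with φ_#𝔪_X ≪ 𝔪_Y. Let ℳ, 𝒩 be Banach L^0(𝕐)-modules. Then there is a unique homomorphism φ* : ℳ ⊗̂_π 𝒩 → (φ*ℳ) ⊗̂_π (φ*𝒩) with φ*(v ⊗ w) = (φ*v) ⊗ (φ*w) for all v ∈ ℳ, w ∈ 𝒩; it satisfies |φ*α|_π = |α|_π ∘ φ for every α ∈ ℳ ⊗̂_π 𝒩, and its image generates (φ*ℳ) ⊗̂_π (φ*𝒩), so that ((φ*ℳ) ⊗̂_π (φ*𝒩), φ*) is a realization of the pullback of ℳ ⊗̂_π 𝒩; in particular φ*(ℳ ⊗̂_π 𝒩) ≅ (φ*ℳ) ⊗̂_π (φ*𝒩) as Banach L^0(𝕏)-modules. -/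

import Mathlib

/-!
The pure tensor map `Ψ : v ⊗ w ↦ φ*v ⊗ φ*w` between the algebraic tensor products satisfies
`|Ψ α|_π = |α|_π ∘ φ` (`pn_tensor_map`); it then extends to the completions by density
(`exists_extension`), the extension inherits the norm identity, and it is unique because a bounded
additive map is determined on a dense set (`eq_zero_of_dense`).

For `|Ψ α|_π ≤ |α|_π ∘ φ`, every representation of `α` is mapped to a representation of `Ψ α`, and
composition with `φ` commutes with infima in `L⁰` since each of them is the pointwise infimum of
a sequence of finite infima (`le_pull_of_isGLB`).

For the reverse inequality, the Hahn–Banach theorem for `L⁰`-modules (`hahn_banach`, resting on the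
Dedekind completeness of `L⁰`) provides a functional `ω` with `|ω| ≤ 1` and `ω α = |α|_π`. The
bilinear form `(v, w) ↦ ω (v ⊗ w) ∘ φ` extends to the pullbacks with the bound `|u| |z|`
(`exists_bilinear_extension`), by two applications of the universal property of the pullback
(`IsPullback.lift`). Its linearization on `φ*ℳ ⊗ φ*𝒩` is dominated by the projective norm and takes
the value `|α|_π ∘ φ` at `Ψ α`.

Finally, the pure tensors `φ*v ⊗ φ*w` generate the target (`dense_span_tensor`), because the
`φ*v` and the `φ*w` generate `φ*ℳ` and `φ*𝒩` and the tensor product is jointly continuous.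
-/

open MeasureTheory Filter Set TensorProduct

noncomputable section

namespace Paper

variable {X : Type*} [MeasurableSpace X]

/-- The space `L⁰(𝕏)` of real-valued measurable functions up to `μ`-a.e. equality. -/
abbrev L0 (μ : Measure X) : Type _ := X →ₘ[μ] ℝ

instance (μ : Measure X) : CommRing (L0 μ) :=
  { (inferInstance : AddCommGroup (L0 μ)), (inferInstance : CommMonoid (L0 μ)) with
    left_distrib := fun a b c => AEEqFun.toGerm_injective <| by
      simp only [AEEqFun.mul_toGerm, AEEqFun.add_toGerm, mul_add]
    right_distrib := fun a b c => AEEqFun.toGerm_injective <| by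
      simp only [AEEqFun.mul_toGerm, AEEqFun.add_toGerm, add_mul]
    zero_mul := fun a => AEEqFun.toGerm_injective <| by
      simp only [AEEqFun.mul_toGerm, AEEqFun.zero_toGerm, zero_mul]
    mul_zero := fun a => AEEqFun.toGerm_injective <| by
      simp only [AEEqFun.mul_toGerm, AEEqFun.zero_toGerm, mul_zero] }

/-- The distance on `L⁰(𝕏)` inducing the topology of convergence in measure, defined through
the auxiliary finite measure `μ.toFinite` (which satisfies `μ ≪ μ.toFinite ≪ μ`). -/
noncomputable def dL0 (μ : Measure X) [SFinite μ] (f g : L0 μ) : ℝ :=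
  ∫ x, min |f x - g x| 1 ∂(μ.toFinite)

/-- A Banach `L⁰(𝕏)`-module: a module over `L⁰(𝕏)` endowed with a pointwise norm, complete
with respect to the induced distance. -/
class BanachMod (μ : Measure X) [SFinite μ] (M : Type*) [AddCommGroup M]
    [Module (L0 μ) M] where
  pn : M → L0 μ
  pn_nonneg : ∀ v : M, 0 ≤ pn v
  pn_eq_zero : ∀ v : M, pn v = 0 ↔ v = 0
  pn_add_le : ∀ v w : M, pn (v + w) ≤ pn v + pn w
  pn_smul : ∀ (f : L0 μ) (v : M), pn (f • v) = |f| * pn v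
  complete : ∀ u : ℕ → M,
    (∀ ε : ℝ, 0 < ε → ∃ N : ℕ, ∀ m ≥ N, ∀ n ≥ N, dL0 μ (pn (u m - u n)) 0 < ε) →
    ∃ v : M, Tendsto (fun n => dL0 μ (pn (u n - v)) 0) atTop (nhds 0)

/-- The pointwise norm of a Banach `L⁰(𝕏)`-module, with the measure explicit. -/
noncomputable def pn (μ : Measure X) [SFinite μ] {M : Type*} [AddCommGroup M]
    [Module (L0 μ) M] [BanachMod μ M] (v : M) : L0 μ :=
  BanachMod.pn v

/-- The distance on a Banach `L⁰(𝕏)`-module. -/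
noncomputable def dM (μ : Measure X) [SFinite μ] {M : Type*} [AddCommGroup M]
    [Module (L0 μ) M] [BanachMod μ M] (v w : M) : ℝ :=
  dL0 μ (pn μ (v - w)) 0

section Defs

variable (μ : Measure X) [SFinite μ]
variable {M N : Type*} [AddCommGroup M] [Module (L0 μ) M] [BanachMod μ M]
  [AddCommGroup N] [Module (L0 μ) N] [BanachMod μ N]

/-- The set of admissible bounds of a map between Banach `L⁰(𝕏)`-modules; the pointwise norm
`|T|` of a homomorphism is the infimum of this set. -/
def homBddSet (T : M → N) : Set (L0 μ) :=
  {g | 0 ≤ g ∧ ∀ v, pn μ (T v) ≤ g * pn μ v}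

/-- A homomorphism of Banach `L⁰(𝕏)`-modules: an `L⁰(𝕏)`-linear map admitting a bound
`g ∈ L⁰(𝕏)⁺` with `|T v| ≤ g |v|` (equivalently, `L⁰(𝕏)`-linear and continuous). -/
def IsHom (T : M →ₗ[L0 μ] N) : Prop :=
  ∃ g, g ∈ homBddSet μ (⇑T)

/-- The set of admissible bounds of an `L⁰(𝕏)`-valued map (for elements of the dual module). -/
def dualBddSet (ω : M → L0 μ) : Set (L0 μ) :=
  {g | 0 ≤ g ∧ ∀ v, |ω v| ≤ g * pn μ v}

/-- Membership in the dual module `ℳ*`: an `L⁰(𝕏)`-linear map `ω : ℳ → L⁰(𝕏)` admitting a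
bound `g ∈ L⁰(𝕏)⁺` with `|ω v| ≤ g |v|`. -/
def IsDual (ω : M →ₗ[L0 μ] L0 μ) : Prop :=
  ∃ g, g ∈ dualBddSet μ (⇑ω)

/-- Membership in the unit disc `𝔻_{ℳ*}` of the dual module: `|ω| ≤ 1`, equivalently
`|ω v| ≤ |v|` for every `v`. -/
def InDualDisc (ω : M →ₗ[L0 μ] L0 μ) : Prop :=
  ∀ v, |ω v| ≤ pn μ v

/-- The family of pointwise norms `|s - ∑_{i ∈ F ∪ G} v i|` for `G` finite disjoint from `F`,
whose `F`-indexed inf-sup being `0` defines `s = ∑_{i∈I} v i`. -/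
def sumUB {I : Type*} (v : I → M) (s : M) (F : Finset I) : Set (L0 μ) :=
  {g | ∃ G : Finset I, Disjoint G F ∧ g = pn μ (s - (∑ i ∈ F, v i + ∑ i ∈ G, v i))}

/-- `HasSumMod μ v s` means that the family `{v_i}` is summable in the Banach `L⁰(𝕏)`-module
with sum `s`, i.e. `⋀_F ⋁_G |s - ∑_{i ∈ F ∪ G} v_i| = 0` (the inner suprema being the values
of `b`, and the outer infimum being `0`). -/
def HasSumMod {I : Type*} (v : I → M) (s : M) : Prop :=
  ∃ b : Finset I → L0 μ, (∀ F, IsLUB (sumUB μ v s F) (b F)) ∧ IsGLB (Set.range b) 0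

/-- A family in a Banach `L⁰(𝕏)`-module is summable if it has a sum. -/
def SummableMod {I : Type*} (v : I → M) : Prop :=
  ∃ s, HasSumMod μ v s

/-- The partial sums `∑_{i ∈ F} |v i|` of the pointwise norms of a family; the element `|v|₁`
of `ℓ₁(I, ℳ)` is the supremum of this set. -/
def l1PartialSums {I : Type*} (v : I → M) : Set (L0 μ) :=
  {g | ∃ F : Finset I, g = ∑ i ∈ F, pn μ (v i)}

/-- Membership in `ℓ₁(I, ℳ)`: the partial sums of the pointwise norms admit a supremum
(equivalently, an upper bound) in `L⁰(𝕏)`. -/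
def Meml1 {I : Type*} (v : I → M) : Prop :=
  ∃ b, IsLUB (l1PartialSums μ v) b

/-- The partial sums `∑_{i ∈ F} |v i|` for an `L⁰(𝕏)`-valued family. -/
def l1PartialSumsF {I : Type*} (v : I → L0 μ) : Set (L0 μ) :=
  {g | ∃ F : Finset I, g = ∑ i ∈ F, |v i|}

/-- Membership in `ℓ₁(I, L⁰(𝕏))`. -/
def Meml1F {I : Type*} (v : I → L0 μ) : Prop :=
  ∃ b, IsLUB (l1PartialSumsF μ v) b

/-- The set whose infimum defines the projective pointwise norm: all values
`∑_{i=1}^n |v_i||w_i|` over representations `α = ∑_{i=1}^n v_i ⊗ w_i`. -/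
def piReps (α : M ⊗[L0 μ] N) : Set (L0 μ) :=
  {g | ∃ (n : ℕ) (v : Fin n → M) (w : Fin n → N),
    α = ∑ i, v i ⊗ₜ[L0 μ] w i ∧ g = ∑ i, pn μ (v i) * pn μ (w i)}

/-- The set whose supremum defines the injective pointwise norm: all values
`|∑_{i=1}^n ω(v_i) η(w_i)|` over representations `α = ∑_{i=1}^n v_i ⊗ w_i` and elements
`ω ∈ 𝔻_{ℳ*}`, `η ∈ 𝔻_{𝒩*}`. -/
def epsReps (α : M ⊗[L0 μ] N) : Set (L0 μ) :=
  {g | ∃ (n : ℕ) (v : Fin n → M) (w : Fin n → N)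
    (ω : M →ₗ[L0 μ] L0 μ) (η : N →ₗ[L0 μ] L0 μ), InDualDisc μ ω ∧ InDualDisc μ η ∧
    α = ∑ i, v i ⊗ₜ[L0 μ] w i ∧ g = |∑ i, ω (v i) * η (w i)|}

/-- `IsPiTensor μ M N P e` states that the Banach `L⁰(𝕏)`-module `P`, together with the
`L⁰(𝕏)`-linear map `e` defined on the algebraic tensor product, realizes the projective
tensor product `ℳ ⊗̂_π 𝒩`: the pointwise norm of `e α` is the projective pointwise norm
`|α|_π` and the image of `e` is dense. -/
structure IsPiTensor (M N P : Type*) [AddCommGroup M] [Module (L0 μ) M] [BanachMod μ M]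
    [AddCommGroup N] [Module (L0 μ) N] [BanachMod μ N]
    [AddCommGroup P] [Module (L0 μ) P] [BanachMod μ P]
    (e : M ⊗[L0 μ] N →ₗ[L0 μ] P) : Prop where
  pn_emb : ∀ α : M ⊗[L0 μ] N, IsGLB (piReps μ α) (pn μ (e α))
  dense : ∀ p : P, ∀ ε : ℝ, 0 < ε → ∃ α : M ⊗[L0 μ] N, dM μ (e α) p < ε

/-- `IsEpsTensor μ M N P e` states that the Banach `L⁰(𝕏)`-module `P`, together with the
`L⁰(𝕏)`-linear map `e` defined on the algebraic tensor product, realizes the injective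
tensor product `ℳ ⊗̂_ε 𝒩`: the pointwise norm of `e α` is the injective pointwise norm
`|α|_ε` and the image of `e` is dense. -/
structure IsEpsTensor (M N P : Type*) [AddCommGroup M] [Module (L0 μ) M] [BanachMod μ M]
    [AddCommGroup N] [Module (L0 μ) N] [BanachMod μ N]
    [AddCommGroup P] [Module (L0 μ) P] [BanachMod μ P]
    (e : M ⊗[L0 μ] N →ₗ[L0 μ] P) : Prop where
  pn_emb : ∀ α : M ⊗[L0 μ] N, IsLUB (epsReps μ α) (pn μ (e α))
  dense : ∀ p : P, ∀ ε : ℝ, 0 < ε → ∃ α : M ⊗[L0 μ] N, dM μ (e α) p < ε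

end Defs

/-- A σ-finite measure space is separable: there is a sequence of measurable sets
approximating every finite-measure set in measure. -/
def MeasSeparable {Y : Type*} [MeasurableSpace Y] (ν : Measure Y) : Prop :=
  ∃ E : ℕ → Set Y, (∀ n, MeasurableSet (E n)) ∧
    ∀ F : Set Y, MeasurableSet F → ν F < ⊤ →
      ∀ ε : ENNReal, 0 < ε → ∃ n, ν (symmDiff (E n) F) < ε

/-- Composition with `φ`, as a map `L⁰(𝕐) → L⁰(𝕏)` (for `φ` with `φ_# μ ≪ ν`). -/
def pullL0 {Y : Type*} [MeasurableSpace Y] {μ : Measure X} {ν : Measure Y} {φ : X → Y}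
    (hφ : Measure.QuasiMeasurePreserving φ μ ν) (f : L0 ν) : L0 μ :=
  f.compQuasiMeasurePreserving φ hφ

/-- `(Mp, pb)` is a realization of the pullback `φ*ℳ` of the Banach `L⁰(𝕐)`-module `ℳ`:
`pb` is linear, `pb (f • v) = (f ∘ φ) • pb v`, `|pb v| = |v| ∘ φ`, and the `L⁰(𝕏)`-module
generated by the image of `pb` is dense in `Mp`. -/
structure IsPullback {Y : Type*} [MeasurableSpace Y] (μ : Measure X) [SFinite μ]
    (ν : Measure Y) [SFinite ν] (φ : X → Y) (hφ : Measure.QuasiMeasurePreserving φ μ ν)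
    (M : Type*) [AddCommGroup M] [Module (L0 ν) M] [BanachMod ν M]
    (Mp : Type*) [AddCommGroup Mp] [Module (L0 μ) Mp] [BanachMod μ Mp]
    (pb : M → Mp) : Prop where
  add : ∀ v w : M, pb (v + w) = pb v + pb w
  smul : ∀ (f : L0 ν) (v : M), pb (f • v) = pullL0 hφ f • pb v
  pnorm : ∀ v : M, pn μ (pb v) = pullL0 hφ (pn ν v)
  dense : ∀ u : Mp, ∀ ε : ℝ, 0 < ε →
    ∃ w ∈ Submodule.span (L0 μ) (Set.range pb), dM μ w u < ε

/-! ### The ordered ring `L⁰` -/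

section L0Basics

variable {μ : Measure X}

theorem coe_sub (f g : L0 μ) : ⇑(f - g) =ᵐ[μ] fun x => f x - g x := AEEqFun.coeFn_sub f g
theorem coe_add (f g : L0 μ) : ⇑(f + g) =ᵐ[μ] fun x => f x + g x := AEEqFun.coeFn_add f g
theorem coe_mul (f g : L0 μ) : ⇑(f * g) =ᵐ[μ] fun x => f x * g x := AEEqFun.coeFn_mul f g
theorem coe_neg (f : L0 μ) : ⇑(-f) =ᵐ[μ] fun x => -f x := AEEqFun.coeFn_neg f
theorem coe_zero : ⇑(0 : L0 μ) =ᵐ[μ] fun _ => 0 := AEEqFun.coeFn_zero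
theorem coe_one : ⇑(1 : L0 μ) =ᵐ[μ] fun _ => 1 := AEEqFun.coeFn_one
theorem coe_abs (f : L0 μ) : ⇑|f| =ᵐ[μ] fun x => |f x| := AEEqFun.coeFn_abs f

theorem le_iff_ae {f g : L0 μ} : f ≤ g ↔ ∀ᵐ x ∂μ, f x ≤ g x := AEEqFun.coeFn_le.symm

theorem nonneg_iff_ae {f : L0 μ} : 0 ≤ f ↔ ∀ᵐ x ∂μ, 0 ≤ f x := by
  rw [le_iff_ae]
  constructor <;> intro h <;> filter_upwards [h, coe_zero (μ := μ)] with x h1 h2 <;> simp_all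

instance : IsOrderedAddMonoid (L0 μ) where
  add_le_add_left a b h c := by
    rw [le_iff_ae] at *
    filter_upwards [h, coe_add a c, coe_add b c] with x h1 h2 h3
    rw [h2, h3]; linarith

theorem L0.mul_nonneg {f g : L0 μ} (hf : 0 ≤ f) (hg : 0 ≤ g) : 0 ≤ f * g := by
  rw [nonneg_iff_ae] at *
  filter_upwards [hf, hg, coe_mul f g] with x h1 h2 h3
  rw [h3]; positivity

instance : ZeroLEOneClass (L0 μ) where
  zero_le_one := by
    rw [nonneg_iff_ae]
    filter_upwards [coe_one (μ := μ)] with x h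
    rw [h]; norm_num

instance : IsOrderedRing (L0 μ) :=
  IsOrderedRing.of_mul_nonneg fun _ _ => L0.mul_nonneg

theorem L0.abs_mul (f g : L0 μ) : |f * g| = |f| * |g| := by
  refine AEEqFun.ext ?_
  filter_upwards [coe_abs (f * g), coe_mul f g, coe_mul |f| |g|, coe_abs f, coe_abs g]
    with x h1 h2 h3 h4 h5
  rw [h1, h2, h3, h4, h5, _root_.abs_mul]

end L0Basics

/-! ### Almost everywhere convergence and the distance of `L⁰` -/

section Convergence

variable {μ : Measure X}

/-- Almost everywhere convergence to `0` of a sequence in `L⁰`. -/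
def TZ (μ : Measure X) (h : ℕ → L0 μ) : Prop :=
  ∀ᵐ x ∂μ, Tendsto (fun n => h n x) atTop (nhds 0)

theorem TZ.add {h k : ℕ → L0 μ} (hh : TZ μ h) (hk : TZ μ k) : TZ μ (fun n => h n + k n) := by
  have := ae_all_iff.2 fun n => coe_add (h n) (k n)
  filter_upwards [hh, hk, this] with x h1 h2 h3
  simp only [h3]
  simpa using h1.add h2

theorem TZ.mul {h k : ℕ → L0 μ} (hh : TZ μ h) (hk : TZ μ k) : TZ μ (fun n => h n * k n) := by
  have := ae_all_iff.2 fun n => coe_mul (h n) (k n)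
  filter_upwards [hh, hk, this] with x h1 h2 h3
  simp only [h3]
  simpa using h1.mul h2

theorem TZ.const_mul {h : ℕ → L0 μ} (hh : TZ μ h) (g : L0 μ) : TZ μ (fun n => g * h n) := by
  have := ae_all_iff.2 fun n => coe_mul g (h n)
  filter_upwards [hh, this] with x h1 h3
  simp only [h3]
  simpa using h1.const_mul (g x)

theorem TZ.squeeze {h k : ℕ → L0 μ} (hh : TZ μ h) (k0 : ∀ n, 0 ≤ k n) (hk : ∀ n, k n ≤ h n) :
    TZ μ k := by
  have h1 := ae_all_iff.2 fun n => nonneg_iff_ae.1 (k0 n)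
  have h2 := ae_all_iff.2 fun n => le_iff_ae.1 (hk n)
  filter_upwards [hh, h1, h2] with x h1 h2 h3
  exact squeeze_zero h2 h3 h1

theorem le_of_TZ {f g : L0 μ} {h : ℕ → L0 μ} (hh : TZ μ h) (H : ∀ n, f ≤ g + h n) : f ≤ g := by
  have h1 := ae_all_iff.2 fun n => le_iff_ae.1 (H n)
  have h2 := ae_all_iff.2 fun n => coe_add g (h n)
  rw [le_iff_ae]
  filter_upwards [hh, h1, h2] with x h1 h2 h3
  have : Tendsto (fun n => g x + h n x) atTop (nhds (g x)) := by simpa using h1.const_add (g x)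
  exact ge_of_tendsto' this fun n => by rw [← h3 n]; exact h2 n

variable [SFinite μ]

theorem dL0_zero_eq (f : L0 μ) : dL0 μ f 0 = ∫ x, min |f x| 1 ∂μ.toFinite := by
  refine integral_congr_ae ?_
  rw [Filter.EventuallyEq, ae_toFinite]
  filter_upwards [coe_zero (μ := μ)] with x h
  simp [h]

theorem integrable_min_abs (f : L0 μ) : Integrable (fun x => min |f x| 1) μ.toFinite := by
  refine Integrable.of_bound (C := 1) ?_ ?_
  · have := f.stronglyMeasurable.measurable
    exact Measurable.aestronglyMeasurable (by fun_prop)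
  · refine Eventually.of_forall fun x => ?_
    rw [Real.norm_of_nonneg (by positivity)]
    exact min_le_right _ _

theorem dL0_nonneg (f : L0 μ) : 0 ≤ dL0 μ f 0 := by
  rw [dL0_zero_eq]; exact integral_nonneg fun x => by positivity

/-- The triangle inequality for the distance of `L⁰`, in the form used for pointwise norms. -/
theorem dL0_add_le {f g h : L0 μ} (f0 : 0 ≤ f) (H : f ≤ g + h) :
    dL0 μ f 0 ≤ dL0 μ g 0 + dL0 μ h 0 := by
  simp only [dL0_zero_eq]
  rw [← integral_add (integrable_min_abs g) (integrable_min_abs h)]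
  refine integral_mono_ae (integrable_min_abs f)
    ((integrable_min_abs g).add (integrable_min_abs h)) ?_
  rw [Filter.EventuallyLE, ae_toFinite]
  filter_upwards [nonneg_iff_ae.1 f0, le_iff_ae.1 H, coe_add g h] with x h1 h2 h3
  rw [h3] at h2
  rw [abs_of_nonneg h1]
  have := le_abs_self (g x)
  have := le_abs_self (h x)
  have := abs_nonneg (g x)
  have := abs_nonneg (h x)
  rcases min_cases |g x| 1 with hc | hc <;> rcases min_cases |h x| 1 with h' | h' <;>
    rcases min_cases (f x) 1 with h'' | h'' <;> linarith

theorem dL0_tendsto_of_TZ {h : ℕ → L0 μ} (hh : TZ μ h) :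
    Tendsto (fun n => dL0 μ (h n) 0) atTop (nhds 0) := by
  simp only [dL0_zero_eq]
  have : (0 : ℝ) = ∫ x, (0 : ℝ) ∂μ.toFinite := by simp
  rw [this]
  refine tendsto_integral_of_dominated_convergence (fun _ => 1)
    (fun n => (integrable_min_abs (h n)).aestronglyMeasurable) (integrable_const _) ?_ ?_
  · intro n
    refine Eventually.of_forall fun x => ?_
    rw [Real.norm_of_nonneg (by positivity)]
    exact min_le_right _ _
  · rw [ae_toFinite]
    filter_upwards [hh] with x hx
    have := (hx.abs).min (tendsto_const_nhds (x := (1 : ℝ)))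
    simpa using this

/-- Convergence in the distance of `L⁰` is convergence in measure, hence a.e. convergence along a
subsequence. -/
theorem exists_subseq_TZ {h : ℕ → L0 μ}
    (H : Tendsto (fun n => dL0 μ (h n) 0) atTop (nhds 0)) :
    ∃ s : ℕ → ℕ, StrictMono s ∧ TZ μ (fun n => h (s n)) := by
  simp only [dL0_zero_eq] at H
  have h1 : TendstoInMeasure μ.toFinite (fun n x => min |h n x| 1) atTop (fun _ => 0) := by
    refine tendstoInMeasure_of_tendsto_eLpNorm (p := 1) one_ne_zero
      (fun n => (integrable_min_abs (h n)).aestronglyMeasurable) aestronglyMeasurable_const ?_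
    have h2 : ∀ n, eLpNorm ((fun x => min |h n x| 1) - fun _ => 0) 1 μ.toFinite
        = ENNReal.ofReal (∫ x, min |h n x| 1 ∂μ.toFinite) := by
      intro n
      have : ((fun x => min |h n x| 1) - fun _ => (0 : ℝ)) = (fun x => min |h n x| 1) := by
        ext; simp
      rw [this, eLpNorm_one_eq_lintegral_enorm,
        ← ofReal_integral_norm_eq_lintegral_enorm (integrable_min_abs (h n))]
      congr 1
      refine integral_congr_ae (Eventually.of_forall fun x => ?_)
      exact Real.norm_of_nonneg (by positivity)
    simp only [h2]
    simpa using ENNReal.tendsto_ofReal H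
  obtain ⟨s, hs, hs'⟩ := h1.exists_seq_tendsto_ae
  refine ⟨s, hs, ?_⟩
  rw [ae_toFinite] at hs'
  filter_upwards [hs'] with x hx
  have h3 : ∀ᶠ n in atTop, min |h (s n) x| 1 < 1 := hx.eventually_lt_const (by norm_num)
  rw [tendsto_zero_iff_abs_tendsto_zero]
  refine hx.congr' ?_
  filter_upwards [h3] with n hn
  rcases min_cases |h (s n) x| 1 with h | h
  · exact h.1
  · linarith

end Convergence

/-! ### Dedekind completeness of `L⁰` -/

section Dedekind

variable {μ : Measure X}

/-- The pointwise supremum of a sequence in `L⁰` that is bounded above. -/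
theorem exists_iSup_seq (g : ℕ → L0 μ) (u : L0 μ) (hu : ∀ n, g n ≤ u) :
    ∃ s : L0 μ, (∀ᵐ x ∂μ, IsLUB (range fun n => g n x) (s x)) := by
  refine ⟨AEEqFun.mk (fun x => ⨆ n, g n x)
    (Measurable.iSup fun n => (g n).stronglyMeasurable.measurable).aestronglyMeasurable, ?_⟩
  filter_upwards [AEEqFun.coeFn_mk (μ := μ) (fun x => ⨆ n, g n x)
    (Measurable.iSup fun n => (g n).stronglyMeasurable.measurable).aestronglyMeasurable,
    ae_all_iff.2 fun n => le_iff_ae.1 (hu n)] with x h1 h2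
  rw [h1]
  exact isLUB_ciSup ⟨u x, by rintro _ ⟨n, rfl⟩; exact h2 n⟩

variable [SFinite μ]

theorem integrable_arctan (f : L0 μ) : Integrable (fun x => Real.arctan (f x)) μ.toFinite := by
  refine Integrable.of_bound (C := Real.pi / 2) ?_ ?_
  · have := f.stronglyMeasurable.measurable
    exact Measurable.aestronglyMeasurable (by fun_prop)
  · refine Eventually.of_forall fun x => ?_
    rw [Real.norm_eq_abs, abs_le]
    exact ⟨(Real.neg_pi_div_two_lt_arctan _).le, (Real.arctan_lt_pi_div_two _).le⟩

/-- A nonempty sup-closed set contains a sequence with the same upper bounds: any sequence along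
which `∫ arctan f` approaches its supremum over the set will do. -/
theorem exists_seq_upperBounds {S : Set (L0 μ)} (hne : S.Nonempty) (hS : SupClosed S) :
    ∃ g : ℕ → L0 μ, (∀ n, g n ∈ S) ∧ ∀ u, (∀ n, g n ≤ u) → ∀ f ∈ S, f ≤ u := by
  set I : L0 μ → ℝ := fun f => ∫ x, Real.arctan (f x) ∂μ.toFinite with hI
  have hbdd : BddAbove (I '' S) := by
    refine ⟨∫ x, Real.pi / 2 ∂μ.toFinite, ?_⟩
    rintro _ ⟨f, -, rfl⟩
    exact integral_mono (integrable_arctan f) (integrable_const _)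
      fun x => (Real.arctan_lt_pi_div_two _).le
  have hne' : (I '' S).Nonempty := hne.image I
  have hex : ∀ n : ℕ, ∃ f ∈ S, sSup (I '' S) - 1 / ((n : ℝ) + 1) < I f := by
    intro n
    obtain ⟨_, ⟨f, hf, rfl⟩, h⟩ := exists_lt_of_lt_csSup hne'
      (sub_lt_self (sSup (I '' S)) (Nat.one_div_pos_of_nat (α := ℝ) (n := n)))
    exact ⟨f, hf, h⟩
  choose g hgS hg using hex
  refine ⟨g, hgS, fun u hu f hf => ?_⟩
  set k : X → ℝ := fun x => max (Real.arctan (f x) - Real.arctan (u x)) 0 with hk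
  have hkint : Integrable k μ.toFinite :=
    ((integrable_arctan f).sub (integrable_arctan u)).sup (integrable_zero _ _ _)
  have hk0 : 0 ≤ k := fun x => le_max_right _ _
  have hle : ∀ n : ℕ, ∫ x, k x ∂μ.toFinite ≤ 1 / ((n : ℝ) + 1) := by
    intro n
    have h1 : I (f ⊔ g n) ≤ sSup (I '' S) := le_csSup hbdd ⟨_, hS hf (hgS n), rfl⟩
    have h2 : ∫ x, k x ∂μ.toFinite ≤ I (f ⊔ g n) - I (g n) := by
      rw [hI, ← integral_sub (integrable_arctan _) (integrable_arctan _)]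
      refine integral_mono_ae hkint ((integrable_arctan _).sub (integrable_arctan _)) ?_
      rw [Filter.EventuallyLE, ae_toFinite]
      filter_upwards [AEEqFun.coeFn_sup f (g n), le_iff_ae.1 (hu n)] with x h3 h4
      simp only [hk, h3]
      refine max_le ?_ ?_
      · exact sub_le_sub (Real.arctan_strictMono.monotone le_sup_left)
          (Real.arctan_strictMono.monotone h4)
      · exact sub_nonneg.2 (Real.arctan_strictMono.monotone le_sup_right)
    linarith [hg n]
  have hzero : ∫ x, k x ∂μ.toFinite = 0 :=
    le_antisymm (ge_of_tendsto' tendsto_one_div_add_atTop_nhds_zero_nat hle) (integral_nonneg hk0)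
  rw [integral_eq_zero_iff_of_nonneg hk0 hkint, Filter.EventuallyEq, ae_toFinite] at hzero
  rw [le_iff_ae]
  filter_upwards [hzero] with x hx
  have : Real.arctan (f x) - Real.arctan (u x) ≤ 0 := by
    have := le_max_left (Real.arctan (f x) - Real.arctan (u x)) 0
    simp only [hk, Pi.zero_apply] at hx
    linarith
  exact Real.arctan_strictMono.le_iff_le.1 (by linarith)

/-- `L⁰` is Dedekind complete. -/
theorem exists_isLUB_L0 {S : Set (L0 μ)} (hne : S.Nonempty) (hb : BddAbove S) :
    ∃ s, IsLUB S s := by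
  obtain ⟨u, hu⟩ := hb
  have hu' : u ∈ upperBounds (supClosure S) := by rwa [upperBounds_supClosure]
  obtain ⟨g, hgS, hg⟩ := exists_seq_upperBounds (hne.mono subset_supClosure)
    (supClosed_supClosure (s := S))
  obtain ⟨s, hs⟩ := exists_iSup_seq g u fun n => hu' (hgS n)
  refine ⟨s, isLUB_supClosure.1 ⟨fun f hf => hg s (fun n => ?_) f hf, fun v hv => ?_⟩⟩
  · rw [le_iff_ae]
    filter_upwards [hs] with x hx
    exact hx.1 ⟨n, rfl⟩
  · rw [le_iff_ae]
    filter_upwards [hs, ae_all_iff.2 fun n => le_iff_ae.1 (hv (hgS n))] with x hx hv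
    exact hx.2 (by rintro _ ⟨n, rfl⟩; exact hv n)

end Dedekind

/-! ### Composition with `φ` -/

section Pull

variable {Y : Type*} [MeasurableSpace Y] {μ : Measure X} {ν : Measure Y} {φ : X → Y}
  (hφ : Measure.QuasiMeasurePreserving φ μ ν)

theorem coe_pull (f : L0 ν) : ⇑(pullL0 hφ f) =ᵐ[μ] fun x => f (φ x) :=
  AEEqFun.coeFn_compQuasiMeasurePreserving f hφ

theorem ae_pull (hφ : Measure.QuasiMeasurePreserving φ μ ν) {p : Y → Prop}
    (h : ∀ᵐ y ∂ν, p y) : ∀ᵐ x ∂μ, p (φ x) :=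
  hφ.ae h

theorem pull_add (f g : L0 ν) : pullL0 hφ (f + g) = pullL0 hφ f + pullL0 hφ g := by
  refine AEEqFun.ext ?_
  filter_upwards [coe_pull hφ (f + g), ae_pull hφ (coe_add f g), coe_pull hφ f, coe_pull hφ g,
    coe_add (pullL0 hφ f) (pullL0 hφ g)] with x h1 h2 h3 h4 h5
  rw [h1, h2, h5, h3, h4]

theorem pull_mul (f g : L0 ν) : pullL0 hφ (f * g) = pullL0 hφ f * pullL0 hφ g := by
  refine AEEqFun.ext ?_
  filter_upwards [coe_pull hφ (f * g), ae_pull hφ (coe_mul f g), coe_pull hφ f, coe_pull hφ g,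
    coe_mul (pullL0 hφ f) (pullL0 hφ g)] with x h1 h2 h3 h4 h5
  rw [h1, h2, h5, h3, h4]

theorem pull_one : pullL0 hφ (1 : L0 ν) = 1 := by
  refine AEEqFun.ext ?_
  filter_upwards [coe_pull hφ 1, ae_pull hφ (coe_one (μ := ν)), coe_one (μ := μ)] with x h1 h2 h3
  rw [h1, h2, h3]

theorem pull_zero : pullL0 hφ (0 : L0 ν) = 0 := by
  refine AEEqFun.ext ?_
  filter_upwards [coe_pull hφ 0, ae_pull hφ (coe_zero (μ := ν)), coe_zero (μ := μ)] with x h1 h2 h3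
  rw [h1, h2, h3]

/-- Composition with `φ` as a ring homomorphism. -/
def pullHom : L0 ν →+* L0 μ where
  toFun := pullL0 hφ
  map_one' := pull_one hφ
  map_mul' := pull_mul hφ
  map_zero' := pull_zero hφ
  map_add' := pull_add hφ

theorem pull_abs (f : L0 ν) : pullL0 hφ |f| = |pullL0 hφ f| := by
  refine AEEqFun.ext ?_
  filter_upwards [coe_pull hφ |f|, ae_pull hφ (coe_abs f), coe_pull hφ f,
    coe_abs (pullL0 hφ f)] with x h1 h2 h3 h4
  rw [h1, h2, h4, h3]

theorem pull_inf (f g : L0 ν) : pullL0 hφ (f ⊓ g) = pullL0 hφ f ⊓ pullL0 hφ g := by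
  refine AEEqFun.ext ?_
  filter_upwards [coe_pull hφ (f ⊓ g), ae_pull hφ (AEEqFun.coeFn_inf f g), coe_pull hφ f,
    coe_pull hφ g, AEEqFun.coeFn_inf (pullL0 hφ f) (pullL0 hφ g)] with x h1 h2 h3 h4 h5
  rw [h1, h2, h5, h3, h4]

theorem pull_mono {f g : L0 ν} (h : f ≤ g) : pullL0 hφ f ≤ pullL0 hφ g := by
  rw [le_iff_ae] at *
  filter_upwards [coe_pull hφ f, coe_pull hφ g, ae_pull hφ h] with x h1 h2 h3
  rwa [h1, h2]

theorem pull_nonneg {f : L0 ν} (h : 0 ≤ f) : 0 ≤ pullL0 hφ f := by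
  rw [← pull_zero hφ]; exact pull_mono hφ h

theorem TZ.pull {h : ℕ → L0 ν} (hh : TZ ν h) : TZ μ (fun n => pullL0 hφ (h n)) := by
  filter_upwards [ae_pull hφ hh, ae_all_iff.2 fun n => coe_pull hφ (h n)] with x h1 h2
  simpa only [h2] using h1

/-- Composition with `φ` is compatible with arbitrary infima: an infimum in `L⁰` is the pointwise
infimum of a sequence of finite infima. -/
theorem le_pull_of_isGLB [SFinite ν] {S : Set (L0 ν)} {s : L0 ν} (hne : S.Nonempty)
    (hs : IsGLB S s) {t : L0 μ} (ht : ∀ g ∈ S, t ≤ pullL0 hφ g) : t ≤ pullL0 hφ s := by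
  have hsup : SupClosed (-(infClosure S)) := by
    intro a ha b hb
    have := infClosed_infClosure (s := S) (Set.mem_neg.1 ha) (Set.mem_neg.1 hb)
    rw [Set.mem_neg, neg_sup]
    exact this
  have hne' : (-(infClosure S)).Nonempty := by
    obtain ⟨f, hf⟩ := hne
    exact ⟨-f, by simpa using subset_infClosure hf⟩
  have hcl : ∀ g ∈ infClosure S, t ≤ pullL0 hφ g :=
    infClosure_min (t := {g | t ≤ pullL0 hφ g}) ht fun a ha b hb => by
      simp only [Set.mem_ofPred_eq, pull_inf]
      exact le_inf ha hb
  have hs' : IsGLB (infClosure S) s := isGLB_infClosure.2 hs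
  obtain ⟨g, hgS, hg⟩ := exists_seq_upperBounds hne' hsup
  obtain ⟨r, hr⟩ := exists_iSup_seq g (-s) fun n => by
    have := hs'.1 (hgS n)
    exact le_neg.1 this
  have hrs : -r ≤ s := by
    refine hs'.2 fun f hf => ?_
    have : -f ≤ r := by
      refine hg r (fun n => ?_) (-f) (by simpa using hf)
      rw [le_iff_ae]
      filter_upwards [hr] with x hx
      exact hx.1 ⟨n, rfl⟩
    exact neg_le.1 this
  refine le_trans ?_ (pull_mono hφ hrs)
  rw [le_iff_ae]
  filter_upwards [coe_pull hφ (-r), ae_pull hφ (coe_neg r), ae_pull hφ hr,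
    ae_all_iff.2 fun n => le_iff_ae.1 (hcl _ (hgS n)),
    ae_all_iff.2 fun n => coe_pull hφ (-g n),
    ae_all_iff.2 fun n => ae_pull hφ (coe_neg (g n))] with x h1 h2 h3 h4 h5 h6
  rw [h1, h2, le_neg]
  refine h3.2 ?_
  rintro _ ⟨n, rfl⟩
  have := h4 n
  rw [h5, h6] at this
  exact le_neg.1 this

end Pull

/-! ### The Hahn–Banach theorem over `L⁰` -/

section HahnBanach

variable {μ : Measure X} {M : Type*} [AddCommGroup M] [Module (L0 μ) M]

theorem pnorm_neg {p : M → L0 μ} (hsmul : ∀ (f : L0 μ) v, p (f • v) = |f| * p v) (v : M) :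
    p (-v) = p v := by
  have h : |(-1 : L0 μ)| = 1 := by rw [abs_neg]; exact abs_of_nonneg zero_le_one
  have := hsmul (-1) v
  rwa [neg_one_smul, h, one_mul] at this

theorem pnorm_zero {p : M → L0 μ} (hsmul : ∀ (f : L0 μ) v, p (f • v) = |f| * p v) :
    p 0 = 0 := by
  have := hsmul 0 0
  simpa using this

/-- The one-step extension in the Hahn–Banach theorem. The graph `G` of a partially defined
functional dominated by `p` can be enlarged by a pair `(z, c)`; `c` is the supremum of the lower
constraints `t - p (u - z)`, and the scalar `f` is handled by dividing by it on `{f ≠ 0}`. -/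
theorem hahn_banach_step [SFinite μ] {p : M → L0 μ} (hadd : ∀ v w, p (v + w) ≤ p v + p w)
    (hsmul : ∀ (f : L0 μ) v, p (f • v) = |f| * p v) (G : Submodule (L0 μ) (M × L0 μ))
    (hG : ∀ q ∈ G, q.2 ≤ p q.1) (z : M) :
    ∃ c : L0 μ, ∀ q ∈ G, ∀ f : L0 μ, q.2 + f * c ≤ p (q.1 + f • z) := by
  have key : ∀ q ∈ G, ∀ q' ∈ G, q.2 - p (q.1 - z) ≤ p (q'.1 + z) - q'.2 := by
    intro q hq q' hq'
    have h1 : q.2 + q'.2 ≤ p (q.1 + q'.1) := hG _ (G.add_mem hq hq')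
    have h2 := hadd (q.1 - z) (q'.1 + z)
    rw [show q.1 - z + (q'.1 + z) = q.1 + q'.1 by abel] at h2
    have h3 := h1.trans h2
    rw [sub_le_iff_le_add, sub_add_eq_add_sub, le_sub_iff_add_le, add_comm (p (q'.1 + z))]
    exact h3
  obtain ⟨c, hc⟩ := exists_isLUB_L0 (S := {s | ∃ q ∈ G, s = q.2 - p (q.1 - z)})
    ⟨_, 0, G.zero_mem, rfl⟩
    ⟨p (0 + z) - 0, by rintro _ ⟨q, hq, rfl⟩; exact key q hq 0 G.zero_mem⟩
  refine ⟨c, fun q hq f => ?_⟩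
  set r : L0 μ := AEEqFun.compMeasurable (fun y : ℝ => y⁻¹) measurable_inv f with hr
  have hrx : ∀ᵐ x ∂μ, r x = (f x)⁻¹ := AEEqFun.coeFn_compMeasurable _ _ f
  have hrq := G.smul_mem r hq
  have hA : c ≤ p (r • q.1 + z) - r * q.2 := hc.2 (by
    rintro _ ⟨q', hq', rfl⟩
    exact key q' hq' _ hrq)
  have hB : -(r * q.2) - p (r • q.1 + z) ≤ c := by
    have := hc.1 ⟨_, G.neg_mem hrq, rfl⟩
    have h2 : p (-(r • q.1) - z) = p (r • q.1 + z) := by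
      rw [← pnorm_neg hsmul]; congr 1; abel
    simpa [h2] using this
  have hC : |f| * p (r • q.1 + z) = |f * r| * p (q.1 + f • z) := by
    rw [← hsmul, ← hsmul, smul_add, smul_add, smul_smul, smul_smul]
    congr 3
    refine AEEqFun.ext ?_
    filter_upwards [coe_mul (f * r) f, coe_mul f r, hrx] with x h1 h2 h3
    rw [h1, h2, h3]
    by_cases h : f x = 0 <;> simp [h]
  have hD : q.2 ≤ p (q.1 + f • z) + |f| * p z := by
    have h1 := hadd (q.1 + f • z) (-(f • z))
    rw [pnorm_neg hsmul, hsmul, add_neg_cancel_right] at h1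
    exact (hG q hq).trans h1
  rw [le_iff_ae] at *
  filter_upwards [hA, hB, hD, hrx, coe_sub (p (r • q.1 + z)) (r * q.2), coe_mul r q.2,
    coe_sub (-(r * q.2)) (p (r • q.1 + z)), coe_neg (r * q.2), coe_add (p (q.1 + f • z)) (|f| * p z),
    coe_mul |f| (p z), coe_abs f, coe_add q.2 (f * c), coe_mul f c,
    coe_mul |f| (p (r • q.1 + z)), coe_mul |f * r| (p (q.1 + f • z)), coe_abs (f * r),
    coe_mul f r] with x hA hB hD hrx e1 e2 e3 e4 e5 e6 e7 e8 e9 e10 e11 e12 e13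
  have hCx := congrArg (fun k : L0 μ => k x) hC
  rw [e10, e11, e12, e13, e7, hrx] at hCx
  rw [e1, e2, hrx] at hA
  rw [e3, e4, e2, hrx] at hB
  rw [e5, e6, e7] at hD
  rw [e8, e9]
  rcases lt_trichotomy (f x) 0 with h | h | h
  · rw [mul_inv_cancel₀ h.ne, abs_one, one_mul, abs_of_neg h] at hCx
    have h1 := mul_le_mul_of_nonpos_left hB h.le
    have h2 : f x * ((f x)⁻¹ * q.2 x) = q.2 x := mul_inv_cancel_left₀ h.ne _
    rw [mul_sub, mul_neg, h2] at h1
    linarith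
  · simp only [h, abs_zero, zero_mul, add_zero] at hD ⊢
    exact hD
  · rw [mul_inv_cancel₀ h.ne', abs_one, one_mul, abs_of_pos h] at hCx
    have h1 := mul_le_mul_of_nonneg_left hA h.le
    have h2 : f x * ((f x)⁻¹ * q.2 x) = q.2 x := mul_inv_cancel_left₀ h.ne' _
    rw [mul_sub, h2] at h1
    linarith

/-- The Hahn–Banach theorem for modules over `L⁰`. Partially defined functionals are encoded by
their graphs, i.e. by submodules of `M × L⁰`; domination by `p` makes such a submodule
single-valued. -/
theorem hahn_banach [SFinite μ] {p : M → L0 μ} (hnn : ∀ v, 0 ≤ p v)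
    (hadd : ∀ v w, p (v + w) ≤ p v + p w)
    (hsmul : ∀ (f : L0 μ) v, p (f • v) = |f| * p v) (z₀ : M) :
    ∃ ω : M →ₗ[L0 μ] L0 μ, ω z₀ = p z₀ ∧ ∀ v, |ω v| ≤ p v := by
  obtain ⟨G, hG₀, hGmax⟩ := zorn_le_nonempty₀
    {G : Submodule (L0 μ) (M × L0 μ) | ∀ q ∈ G, q.2 ≤ p q.1} (by
      intro C hC hchain G₁ hG₁
      refine ⟨sSup C, fun q hq => ?_, fun G hG => le_sSup hG⟩
      obtain ⟨G, hG, hqG⟩ := (Submodule.mem_sSup_of_directed ⟨G₁, hG₁⟩ hchain.directedOn).1 hq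
      exact hC hG q hqG)
    (Submodule.span (L0 μ) {(z₀, p z₀)}) (by
      intro q hq
      obtain ⟨f, rfl⟩ := Submodule.mem_span_singleton.1 hq
      change f * p z₀ ≤ p (f • z₀)
      rw [hsmul]
      exact mul_le_mul_of_nonneg_right (le_abs_self f) (hnn _))
  have hGle : ∀ q ∈ G, q.2 ≤ p q.1 := hGmax.prop
  have htotal : ∀ z, ∃ c, (z, c) ∈ G := by
    intro z
    obtain ⟨c, hc⟩ := hahn_banach_step hadd hsmul G hGle z
    refine ⟨c, ?_⟩
    have hle : G ⊔ Submodule.span (L0 μ) {(z, c)} ≤ G := by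
      refine hGmax.le_of_ge (fun q hq => ?_) le_sup_left
      obtain ⟨q', hq', s, hs, rfl⟩ := Submodule.mem_sup.1 hq
      obtain ⟨f, rfl⟩ := Submodule.mem_span_singleton.1 hs
      exact hc q' hq' f
    exact hle (Submodule.mem_sup_right (Submodule.mem_span_singleton_self _))
  have huniq : ∀ v s t, (v, s) ∈ G → (v, t) ∈ G → s = t := by
    have aux : ∀ v s t, (v, s) ∈ G → (v, t) ∈ G → s ≤ t := by
      intro v s t hs ht
      have := hGle _ (G.sub_mem hs ht)
      simp only [Prod.mk_sub_mk, sub_self, pnorm_zero hsmul] at this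
      exact sub_nonpos.1 this
    exact fun v s t hs ht => le_antisymm (aux v s t hs ht) (aux v t s ht hs)
  choose ω hω using htotal
  refine ⟨⟨⟨ω, fun v w => ?_⟩, fun f v => ?_⟩, ?_, fun v => ?_⟩
  · exact huniq _ _ _ (hω _) (G.add_mem (hω v) (hω w))
  · exact huniq _ _ _ (hω _) (G.smul_mem f (hω v))
  · exact huniq _ _ _ (hω _) (hG₀ (Submodule.mem_span_singleton_self _))
  · refine sup_le (hGle _ (hω v)) ?_
    have := hGle _ (G.neg_mem (hω v))
    rw [← pnorm_neg hsmul]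
    exact this

end HahnBanach

/-! ### Complete pointwise norms -/

section PNorm

variable {μ : Measure X}

/-- `p` is a pointwise norm on the module `Q`, complete in the following sense: a sequence which is
Cauchy with an explicit a.e. vanishing rate `h` converges with rate `h`. -/
structure IsPN (μ : Measure X) {Q : Type*} [AddCommGroup Q] [Module (L0 μ) Q]
    (p : Q → L0 μ) : Prop where
  nonneg : ∀ v, 0 ≤ p v
  eq_zero : ∀ v, p v = 0 → v = 0
  add_le : ∀ v w, p (v + w) ≤ p v + p w
  smul : ∀ (f : L0 μ) v, p (f • v) = |f| * p v
  complete : ∀ (u : ℕ → Q) (h : ℕ → L0 μ), TZ μ h → (∀ m n, p (u m - u n) ≤ h m + h n) →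
    ∃ v, ∀ n, p (u n - v) ≤ h n

namespace IsPN

variable {Q : Type*} [AddCommGroup Q] [Module (L0 μ) Q] {p : Q → L0 μ}

theorem neg (hp : IsPN μ p) (v : Q) : p (-v) = p v := pnorm_neg hp.smul v

theorem zero (hp : IsPN μ p) : p 0 = 0 := pnorm_zero hp.smul

theorem sub_le (hp : IsPN μ p) (v w : Q) : p (v - w) ≤ p v + p w := by
  rw [sub_eq_add_neg, ← hp.neg w]; exact hp.add_le _ _

theorem sub_comm (hp : IsPN μ p) (v w : Q) : p (v - w) = p (w - v) := by
  rw [← hp.neg, neg_sub]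

theorem tri (hp : IsPN μ p) (u v w : Q) : p (u - w) ≤ p (u - v) + p (v - w) := by
  rw [show u - w = (u - v) + (v - w) by abel]; exact hp.add_le _ _

theorem le_add_sub (hp : IsPN μ p) (v w : Q) : p v ≤ p w + p (v - w) := by
  have := hp.add_le w (v - w)
  rwa [add_sub_cancel] at this

theorem eq_zero_of_le (hp : IsPN μ p) {v : Q} (h : p v ≤ 0) : v = 0 :=
  hp.eq_zero v (le_antisymm h (hp.nonneg v))

theorem sum_le (hp : IsPN μ p) {ι : Type*} (s : Finset ι) (v : ι → Q) :
    p (∑ i ∈ s, v i) ≤ ∑ i ∈ s, p (v i) := by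
  classical
  induction s using Finset.induction_on with
  | empty => simp [hp.zero]
  | insert i s hi ih =>
    rw [Finset.sum_insert hi, Finset.sum_insert hi]
    exact (hp.add_le _ _).trans (add_le_add le_rfl ih)

end IsPN

theorem isPN_abs : IsPN μ (fun f : L0 μ => |f|) where
  nonneg f := abs_nonneg f
  eq_zero f h := by
    refine AEEqFun.ext ?_
    have h' : ∀ᵐ x ∂μ, |f| x = (0 : L0 μ) x := by rw [h]; exact Eventually.of_forall fun _ => rfl
    filter_upwards [h', coe_abs f, coe_zero (μ := μ)] with x h1 h2 h3
    rw [h2, h3, abs_eq_zero] at h1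
    rw [h1, h3]
  add_le f g := by
    rw [le_iff_ae]
    filter_upwards [coe_abs (f + g), coe_add f g, coe_add |f| |g|, coe_abs f, coe_abs g]
      with x h1 h2 h3 h4 h5
    rw [h1, h2, h3, h4, h5]
    exact abs_add_le _ _
  smul f g := L0.abs_mul f g
  complete u h hh H := by
    have hx : ∀ᵐ x ∂μ, (∀ m n, |u m x - u n x| ≤ h m x + h n x) := by
      refine ae_all_iff.2 fun m => ae_all_iff.2 fun n => ?_
      filter_upwards [le_iff_ae.1 (H m n), coe_abs (u m - u n), coe_sub (u m) (u n),
        coe_add (h m) (h n)] with x h1 h2 h3 h4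
      rwa [h2, h3, h4] at h1
    have hlim : ∀ᵐ x ∂μ, ∃ l, Tendsto (fun n => u n x) atTop (nhds l) := by
      filter_upwards [hh, hx] with x h1 h2
      refine cauchySeq_tendsto_of_complete (Metric.cauchySeq_iff.2 fun ε hε => ?_)
      obtain ⟨N, hN⟩ := eventually_atTop.1 (h1.eventually_lt_const (half_pos hε))
      refine ⟨N, fun m hm n hn => ?_⟩
      rw [Real.dist_eq]
      linarith [h2 m n, hN m hm, hN n hn]
    obtain ⟨l, hl, hl'⟩ := exists_stronglyMeasurable_limit_of_tendsto_ae
      (fun n => (u n).aestronglyMeasurable) hlim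
    refine ⟨AEEqFun.mk l hl.aestronglyMeasurable, fun n => ?_⟩
    rw [le_iff_ae]
    filter_upwards [hh, hx, hl', AEEqFun.coeFn_mk l hl.aestronglyMeasurable,
      coe_abs (u n - AEEqFun.mk l hl.aestronglyMeasurable),
      coe_sub (u n) (AEEqFun.mk l hl.aestronglyMeasurable)] with x h1 h2 h3 h4 h5 h6
    rw [h5, h6, h4]
    have e1 : Tendsto (fun m => |u n x - u m x|) atTop (nhds |u n x - l x|) :=
      (h3.const_sub _).abs
    have e2 : Tendsto (fun m => h n x + h m x) atTop (nhds (h n x)) := by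
      simpa using h1.const_add (h n x)
    exact le_of_tendsto_of_tendsto' e1 e2 fun m => h2 n m

variable [SFinite μ] {M : Type*} [AddCommGroup M] [Module (L0 μ) M] [BanachMod μ M]

theorem isPN_pn : IsPN μ (pn μ : M → L0 μ) where
  nonneg := BanachMod.pn_nonneg
  eq_zero v := (BanachMod.pn_eq_zero v).1
  add_le := BanachMod.pn_add_le
  smul := BanachMod.pn_smul
  complete u h hh H := by
    have hcauchy : ∀ ε : ℝ, 0 < ε → ∃ N : ℕ, ∀ m ≥ N, ∀ n ≥ N,
        dL0 μ (BanachMod.pn (μ := μ) (u m - u n)) 0 < ε := by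
      intro ε hε
      obtain ⟨N, hN⟩ := eventually_atTop.1
        ((dL0_tendsto_of_TZ hh).eventually_lt_const (half_pos hε))
      refine ⟨N, fun m hm n hn => ?_⟩
      have := dL0_add_le (BanachMod.pn_nonneg (μ := μ) (u m - u n)) (H m n)
      linarith [hN m hm, hN n hn]
    obtain ⟨v, hv⟩ := BanachMod.complete (μ := μ) u hcauchy
    obtain ⟨s, hs, hs'⟩ := exists_subseq_TZ hv
    refine ⟨v, fun n => ?_⟩
    have hhs : TZ μ fun k => h (s k) := by
      filter_upwards [hh] with x hx
      exact hx.comp hs.tendsto_atTop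
    refine le_of_TZ (hhs.add hs') fun k => ?_
    have h1 : pn μ (u n - v) ≤ pn μ (u n - u (s k)) + pn μ (u (s k) - v) := by
      rw [show u n - v = (u n - u (s k)) + (u (s k) - v) by abel]
      exact BanachMod.pn_add_le _ _
    rw [← add_assoc]
    exact h1.trans (add_le_add (H n (s k)) le_rfl)

/-- Density in the distance of a Banach module yields sequences whose pointwise norms converge a.e. -/
theorem exists_seq_TZ {ι : Type*} {F : ι → M} {u : M}
    (H : ∀ ε : ℝ, 0 < ε → ∃ i, dM μ (F i) u < ε) :
    ∃ s : ℕ → ι, TZ μ (fun n => pn μ (F (s n) - u)) := by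
  choose s hs using fun n : ℕ => H (1 / ((n : ℝ) + 1)) (by positivity)
  have : Tendsto (fun n => dL0 μ (pn μ (F (s n) - u)) 0) atTop (nhds 0) :=
    squeeze_zero (fun n => dL0_nonneg _) (fun n => (hs n).le)
      tendsto_one_div_add_atTop_nhds_zero_nat
  obtain ⟨t, -, ht⟩ := exists_subseq_TZ this
  exact ⟨fun n => s (t n), ht⟩

end PNorm

/-! ### Extension by density -/

section Extension

variable {μ : Measure X} {Q : Type*} [AddCommGroup Q] [Module (L0 μ) Q] {p : Q → L0 μ}

/-- Extension by density: an additive map `T` on `B`, bounded with respect to the seminorm that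
`a` induces through `ι : B → A`, factors through `ι` when `ι` has dense range. -/
theorem exists_extension (hp : IsPN μ p) {A B : Type*} [AddCommGroup A] [AddCommGroup B]
    {a : A → L0 μ} (a_zero : a 0 = 0) (a_neg : ∀ u, a (-u) = a u)
    (a_add : ∀ u v, a (u + v) ≤ a u + a v) (ι : B →+ A)
    (hι : ∀ u, ∃ b : ℕ → B, TZ μ (fun n => a (ι (b n) - u)))
    (T : B →+ Q) (hT : ∀ b, p (T b) ≤ a (ι b)) :
    ∃ T' : A →+ Q, (∀ b, T' (ι b) = T b) ∧ ∀ u, p (T' u) ≤ a u := by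
  have a_comm : ∀ u v, a (u - v) = a (v - u) := fun u v => by rw [← a_neg, neg_sub]
  have a_tri : ∀ u v w, a (u - w) ≤ a (u - v) + a (v - w) := fun u v w => by
    rw [show u - w = (u - v) + (v - w) by abel]; exact a_add _ _
  have hTsub : ∀ b c, p (T b - T c) ≤ a (ι b - ι c) := fun b c => by
    rw [← map_sub, ← map_sub]; exact hT _
  have key : ∀ u, ∃ q, ∀ b, p (T b - q) ≤ a (ι b - u) := by
    intro u
    obtain ⟨b, hb⟩ := hι u
    obtain ⟨q, hq⟩ := hp.complete (fun n => T (b n)) _ hb fun m n =>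
      (hTsub _ _).trans ((a_tri _ u _).trans (by rw [a_comm u]))
    refine ⟨q, fun c => le_of_TZ (hb.add hb) fun n => ?_⟩
    have h1 := hp.tri (T c) (T (b n)) q
    have h2 := (hTsub c (b n)).trans (a_tri _ u _)
    rw [a_comm u] at h2
    calc p (T c - q) ≤ _ := h1
      _ ≤ (a (ι c - u) + a (ι (b n) - u)) + a (ι (b n) - u) := add_le_add h2 (hq n)
      _ = _ := add_assoc _ _ _
  choose T' hT' using key
  have hadd : ∀ u v, T' (u + v) = T' u + T' v := by
    intro u v
    obtain ⟨b, hb⟩ := hι u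
    obtain ⟨c, hc⟩ := hι v
    refine sub_eq_zero.1 (hp.eq_zero_of_le ?_)
    refine le_of_TZ ((hb.add hc).add (hb.add hc)) fun n => ?_
    rw [zero_add]
    have h1 : p (T (b n + c n) - T' (u + v)) ≤ a (ι (b n) - u) + a (ι (c n) - v) := by
      refine (hT' (u + v) (b n + c n)).trans ?_
      rw [map_add, show ι (b n) + ι (c n) - (u + v) = (ι (b n) - u) + (ι (c n) - v) by abel]
      exact a_add _ _
    have h2 : p ((T (b n) - T' u) + (T (c n) - T' v)) ≤ a (ι (b n) - u) + a (ι (c n) - v) :=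
      (hp.add_le _ _).trans (add_le_add (hT' u _) (hT' v _))
    rw [show T' (u + v) - (T' u + T' v) = ((T (b n) - T' u) + (T (c n) - T' v))
      - (T (b n + c n) - T' (u + v)) by rw [map_add]; abel]
    exact (hp.sub_le _ _).trans (add_le_add h2 h1)
  refine ⟨AddMonoidHom.mk' T' hadd, fun b => ?_, fun u => ?_⟩
  · have := hT' (ι b) b
    rw [sub_self, a_zero] at this
    exact (sub_eq_zero.1 (hp.eq_zero_of_le this)).symm
  · have := hT' u 0
    rwa [map_zero, map_zero, zero_sub, zero_sub, hp.neg, a_neg] at this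

/-- A bounded additive map vanishing on a dense subset vanishes. -/
theorem eq_zero_of_dense (hp : IsPN μ p) {A B : Type*} [AddCommGroup A]
    {a : A → L0 μ} (ι : B → A)
    (hι : ∀ u, ∃ b : ℕ → B, TZ μ (fun n => a (ι (b n) - u)))
    (S : A →+ Q) (g : L0 μ) (hS : ∀ u, p (S u) ≤ g * a u) (h0 : ∀ b, S (ι b) = 0) : S = 0 := by
  ext u
  obtain ⟨b, hb⟩ := hι u
  refine hp.eq_zero_of_le (le_of_TZ (hb.const_mul g) fun n => ?_)
  rw [zero_add]
  have := hS (ι (b n) - u)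
  rwa [map_sub, h0, zero_sub, hp.neg] at this

end Extension

/-! ### The universal property of the pullback -/

section PullbackUniversal

variable {Y : Type*} [MeasurableSpace Y] {μ : Measure X} [SFinite μ] {ν : Measure Y} [SFinite ν]
  {φ : X → Y} {hφ : Measure.QuasiMeasurePreserving φ μ ν}
  {M : Type*} [AddCommGroup M] [Module (L0 ν) M] [BanachMod ν M]
  {Mp : Type*} [AddCommGroup Mp] [Module (L0 μ) Mp] [BanachMod μ Mp]
  {Q : Type*} [AddCommGroup Q] [Module (L0 μ) Q] {p : Q → L0 μ}

/-- A bound on `ℳ` yields the same bound on `L⁰(𝕏)`-combinations of elements pulled back from `ℳ`.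
The coefficients are approximated, point by point, by rational constants; constants are pulled back
from `𝕐`, so for them the bound on `ℳ` applies. -/
theorem pullback_combination_bound (hp : IsPN μ p) {pb : M → Mp}
    (hpb : IsPullback μ ν φ hφ M Mp pb) (T : M →+ Q)
    (hTs : ∀ (f : L0 ν) v, T (f • v) = pullL0 hφ f • T v) (g : L0 μ) (hg : 0 ≤ g)
    (hT : ∀ v, p (T v) ≤ g * pullL0 hφ (pn ν v)) (s : Finset M) (f : M → L0 μ) :
    p (∑ v ∈ s, f v • T v) ≤ g * pn μ (∑ v ∈ s, f v • pb v) := by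
  have hq : IsPN μ (pn μ : Mp → L0 μ) := isPN_pn
  have pb_sum : ∀ k : M → L0 ν, pb (∑ v ∈ s, k v • v) = ∑ v ∈ s, pullL0 hφ (k v) • pb v := by
    intro k
    have : AddMonoidHom.mk' pb hpb.add (∑ v ∈ s, k v • v) = ∑ v ∈ s, pullL0 hφ (k v) • pb v := by
      rw [map_sum]
      exact Finset.sum_congr rfl fun v _ => hpb.smul _ _
    exact this
  -- The estimate with an error term, for every rational vector `r` of approximating constants.
  have key : ∀ r : s → ℚ, p (∑ v ∈ s, f v • T v) ≤ g * pn μ (∑ v ∈ s, f v • pb v)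
      + ∑ v : s, |f v - pullL0 hφ (AEEqFun.const Y (r v : ℝ))| * (2 * (g * pn μ (pb v))) := by
    intro r
    classical
    let k : M → L0 ν := fun v => if h : v ∈ s then AEEqFun.const Y (r ⟨v, h⟩ : ℝ) else 0
    let d : M → L0 μ := fun v => f v - pullL0 hφ (k v)
    have hsum : ∑ v : s, |f v - pullL0 hφ (AEEqFun.const Y (r v : ℝ))| * (2 * (g * pn μ (pb v)))
        = ∑ v ∈ s, |d v| * (2 * (g * pn μ (pb v))) := by
      rw [← Finset.sum_coe_sort s]
      refine Finset.sum_congr rfl fun v _ => ?_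
      simp [d, k]
    rw [hsum]
    have e1 : ∑ v ∈ s, f v • T v = T (∑ v ∈ s, k v • v) + ∑ v ∈ s, d v • T v := by
      rw [map_sum, ← Finset.sum_add_distrib]
      refine Finset.sum_congr rfl fun v _ => ?_
      rw [hTs, ← add_smul]; congr 1; simp [d]
    have e2 : pb (∑ v ∈ s, k v • v) = ∑ v ∈ s, f v • pb v - ∑ v ∈ s, d v • pb v := by
      rw [pb_sum, ← Finset.sum_sub_distrib]
      refine Finset.sum_congr rfl fun v _ => ?_
      rw [← sub_smul]; congr 1; simp [d]
    have e3 : p (∑ v ∈ s, d v • T v) ≤ ∑ v ∈ s, |d v| * (g * pn μ (pb v)) := by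
      refine (hp.sum_le _ _).trans (Finset.sum_le_sum fun v _ => ?_)
      rw [hp.smul, hpb.pnorm]
      exact mul_le_mul_of_nonneg_left (hT v) (abs_nonneg _)
    have e4 : pn μ (∑ v ∈ s, d v • pb v) ≤ ∑ v ∈ s, |d v| * pn μ (pb v) := by
      refine (hq.sum_le _ _).trans (Finset.sum_le_sum fun v _ => ?_)
      rw [hq.smul]
    have e5 : p (T (∑ v ∈ s, k v • v)) ≤ g * (pn μ (∑ v ∈ s, f v • pb v)
        + ∑ v ∈ s, |d v| * pn μ (pb v)) := by
      refine (hT _).trans (mul_le_mul_of_nonneg_left ?_ hg)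
      rw [← hpb.pnorm, e2]
      exact (hq.sub_le _ _).trans (add_le_add le_rfl e4)
    rw [e1]
    refine (hp.add_le _ _).trans ((add_le_add e5 e3).trans (le_of_eq ?_))
    rw [mul_add, add_assoc, Finset.mul_sum, ← Finset.sum_add_distrib]
    congr 1
    exact Finset.sum_congr rfl fun v _ => by ring
  rw [le_iff_ae]
  have hval : ∀ᵐ x ∂μ, ∀ r : s → ℚ, (p (∑ v ∈ s, f v • T v)) x
      ≤ (g * pn μ (∑ v ∈ s, f v • pb v)) x
        + ∑ v : s, |f v x - r v| * (2 * (g * pn μ (pb v)) : L0 μ) x := by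
    refine ae_all_iff.2 fun r => ?_
    have h2 : ∀ᵐ x ∂μ, ∀ v : s, (|f v - pullL0 hφ (AEEqFun.const Y (r v : ℝ))|
        * (2 * (g * pn μ (pb v)))) x = |f v x - r v| * (2 * (g * pn μ (pb v)) : L0 μ) x := by
      refine ae_all_iff.2 fun v => ?_
      filter_upwards [coe_mul |f v - pullL0 hφ (AEEqFun.const Y (r v : ℝ))|
        (2 * (g * pn μ (pb v))), coe_abs (f v - pullL0 hφ (AEEqFun.const Y (r v : ℝ))),
        coe_sub (f v) (pullL0 hφ (AEEqFun.const Y (r v : ℝ))),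
        coe_pull hφ (AEEqFun.const Y (r v : ℝ)),
        ae_pull hφ (AEEqFun.coeFn_const (μ := ν) Y (r v : ℝ))] with x h1 h2 h3 h4 h5
      rw [h1, h2, h3, h4, h5]
      rfl
    filter_upwards [le_iff_ae.1 (key r), coe_add (g * pn μ (∑ v ∈ s, f v • pb v))
      (∑ v : s, |f v - pullL0 hφ (AEEqFun.const Y (r v : ℝ))| * (2 * (g * pn μ (pb v)))), h2,
      AEEqFun.coeFn_fun_finsetSum (μ := μ) Finset.univ (fun v : s =>
        |f v - pullL0 hφ (AEEqFun.const Y (r v : ℝ))| * (2 * (g * pn μ (pb v))))]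
      with x h1 h2 h3 h4
    rw [h2, h4] at h1
    simpa only [h3] using h1
  filter_upwards [hval] with x hx
  -- At a fixed point `x`, let the rational constants tend to the values `f v x`.
  choose r hr using fun (n : ℕ) (v : s) =>
    exists_rat_near (f v x) (show (0 : ℝ) < 1 / ((n : ℝ) + 1) by positivity)
  have hlim : Tendsto (fun n => (g * pn μ (∑ v ∈ s, f v • pb v)) x
      + ∑ v : s, |f v x - r n v| * (2 * (g * pn μ (pb v)) : L0 μ) x) atTop
      (nhds ((g * pn μ (∑ v ∈ s, f v • pb v)) x
        + ∑ v : s, 0 * (2 * (g * pn μ (pb v)) : L0 μ) x)) :=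
    (tendsto_finsetSum _ fun v _ => (squeeze_zero (fun n => abs_nonneg _)
      (fun n => (hr n v).le) tendsto_one_div_add_atTop_nhds_zero_nat).mul_const _).const_add _
  simp only [zero_mul, Finset.sum_const_zero, add_zero] at hlim
  exact ge_of_tendsto' hlim fun n => hx (r n)

/-- Sequential form of the density of the `L⁰(𝕏)`-span of the image of a pullback map. -/
theorem IsPullback.exists_seq {pb : M → Mp} (hpb : IsPullback μ ν φ hφ M Mp pb) (u : Mp) :
    ∃ b : ℕ → (M →₀ L0 μ),
      TZ μ (fun n => pn μ (Finsupp.linearCombination (L0 μ) pb (b n) - u)) := by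
  refine exists_seq_TZ (F := fun b : M →₀ L0 μ => Finsupp.linearCombination (L0 μ) pb b)
    fun ε hε => ?_
  obtain ⟨w, hw, hwu⟩ := hpb.dense u ε hε
  rw [← Finsupp.range_linearCombination] at hw
  obtain ⟨b, rfl⟩ := hw
  exact ⟨b, hwu⟩

/-- A bounded linear map on a pullback is determined by its values on pulled back elements. -/
theorem IsPullback.ext (hp : IsPN μ p) {pb : M → Mp} (hpb : IsPullback μ ν φ hφ M Mp pb)
    {S T : Mp →ₗ[L0 μ] Q} {g h : L0 μ} (hS : ∀ u, p (S u) ≤ g * pn μ u)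
    (hT : ∀ u, p (T u) ≤ h * pn μ u) (H : ∀ v, S (pb v) = T (pb v)) : S = T := by
  have := eq_zero_of_dense hp (a := pn μ) (fun b => Finsupp.linearCombination (L0 μ) pb b)
    hpb.exists_seq (S - T).toAddMonoidHom (g + h) (fun u => by
      rw [add_mul]
      exact (hp.sub_le _ _).trans (add_le_add (hS u) (hT u)))
    (fun b => by
      change (S - T) (Finsupp.linearCombination (L0 μ) pb b) = 0
      rw [Finsupp.linearCombination_apply, Finsupp.sum, map_sum]
      refine Finset.sum_eq_zero fun v _ => ?_
      rw [map_smul, LinearMap.sub_apply, H, sub_self, smul_zero])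
  ext u
  exact sub_eq_zero.1 (DFunLike.congr_fun this u)

/-- The universal property of the pullback: a `φ`-semilinear map `T` on `ℳ` with
`|T v| ≤ g (|v| ∘ φ)` factors through the pullback, with the same bound. -/
theorem IsPullback.lift (hp : IsPN μ p) {pb : M → Mp} (hpb : IsPullback μ ν φ hφ M Mp pb)
    (T : M →+ Q) (hTs : ∀ (f : L0 ν) v, T (f • v) = pullL0 hφ f • T v) (g : L0 μ) (hg : 0 ≤ g)
    (hT : ∀ v, p (T v) ≤ g * pullL0 hφ (pn ν v)) :
    ∃ T' : Mp →ₗ[L0 μ] Q, (∀ v, T' (pb v) = T v) ∧ ∀ u, p (T' u) ≤ g * pn μ u := by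
  have hq : IsPN μ (pn μ : Mp → L0 μ) := isPN_pn
  obtain ⟨T', hT', hT'b⟩ := exists_extension hp (a := fun u : Mp => g * pn μ u)
    (by rw [hq.zero, mul_zero]) (fun u => by rw [hq.neg])
    (fun u v => by rw [← mul_add]; exact mul_le_mul_of_nonneg_left (hq.add_le _ _) hg)
    (Finsupp.linearCombination (L0 μ) pb).toAddMonoidHom
    (fun u => by
      obtain ⟨b, hb⟩ := hpb.exists_seq u
      exact ⟨b, hb.const_mul g⟩)
    (Finsupp.linearCombination (L0 μ) T).toAddMonoidHom
    (fun b => by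
      have := pullback_combination_bound hp hpb T hTs g hg hT b.support b
      simpa only [LinearMap.toAddMonoidHom_coe, Finsupp.linearCombination_apply, Finsupp.sum]
        using this)
  have hlc : ∀ b, T' (Finsupp.linearCombination (L0 μ) pb b)
      = Finsupp.linearCombination (L0 μ) T b := hT'
  have hsmul : ∀ (f : L0 μ) u, T' (f • u) = f • T' u := by
    intro f u
    have := eq_zero_of_dense hp (a := pn μ) (fun b => Finsupp.linearCombination (L0 μ) pb b)
      hpb.exists_seq
      (T'.comp (DistribSMul.toAddMonoidHom Mp f) - (DistribSMul.toAddMonoidHom Q f).comp T')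
      (2 * (|f| * g)) (fun u => by
        change p (T' (f • u) - f • T' u) ≤ _
        have h1 := hT'b (f • u)
        rw [hq.smul] at h1
        have h2 : p (f • T' u) ≤ |f| * (g * pn μ u) := by
          rw [hp.smul]; exact mul_le_mul_of_nonneg_left (hT'b u) (abs_nonneg f)
        exact (hp.sub_le _ _).trans ((add_le_add h1 h2).trans (le_of_eq (by ring))))
      (fun b => by
        change T' (f • Finsupp.linearCombination (L0 μ) pb b)
          - f • T' (Finsupp.linearCombination (L0 μ) pb b) = 0
        rw [← map_smul, hlc, hlc, map_smul, sub_self])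
    exact sub_eq_zero.1 (DFunLike.congr_fun this u)
  refine ⟨⟨⟨T', T'.map_add⟩, hsmul⟩, fun v => ?_, hT'b⟩
  have := hlc (Finsupp.single v 1)
  rwa [Finsupp.linearCombination_single, Finsupp.linearCombination_single, one_smul,
    one_smul] at this

end PullbackUniversal

/-! ### Projective tensor products and pullbacks -/

section Tensor

variable {Y : Type*} [MeasurableSpace Y] {μ : Measure X} [SFinite μ] {ν : Measure Y} [SFinite ν]
  {φ : X → Y} {hφ : Measure.QuasiMeasurePreserving φ μ ν}
  {M : Type*} [AddCommGroup M] [Module (L0 ν) M] [BanachMod ν M]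
  {N : Type*} [AddCommGroup N] [Module (L0 ν) N] [BanachMod ν N]
  {Mp : Type*} [AddCommGroup Mp] [Module (L0 μ) Mp] [BanachMod μ Mp]
  {Np : Type*} [AddCommGroup Np] [Module (L0 μ) Np] [BanachMod μ Np]
  {pbM : M → Mp} {pbN : N → Np}

/-- A bilinear form `b` on `ℳ × 𝒩` with `|b v w| ≤ |v| |w|` extends to the pullbacks, with the
same bound: the universal property is applied in each variable separately. -/
theorem exists_bilinear_extension (hpbM : IsPullback μ ν φ hφ M Mp pbM)
    (hpbN : IsPullback μ ν φ hφ N Np pbN) (b : M →ₗ[L0 ν] N →ₗ[L0 ν] L0 ν)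
    (hb : ∀ v w, |b v w| ≤ pn ν v * pn ν w) :
    ∃ B : Mp →ₗ[L0 μ] Np →ₗ[L0 μ] L0 μ, (∀ v w, B (pbM v) (pbN w) = pullL0 hφ (b v w)) ∧
      ∀ u z, |B u z| ≤ pn μ u * pn μ z := by
  have hN : IsPN ν (pn ν : N → L0 ν) := isPN_pn
  have hMp : IsPN μ (pn μ : Mp → L0 μ) := isPN_pn
  have habs : IsPN μ (fun f : L0 μ => |f|) := isPN_abs
  have step1 : ∀ w, ∃ T : Mp →ₗ[L0 μ] L0 μ, (∀ v, T (pbM v) = pullL0 hφ (b v w)) ∧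
      ∀ u, |T u| ≤ pullL0 hφ (pn ν w) * pn μ u := by
    intro w
    refine hpbM.lift habs (AddMonoidHom.mk' (fun v => pullL0 hφ (b v w)) fun v v' => ?_)
      (fun f v => ?_) _ (pull_nonneg hφ (hN.nonneg w)) fun v => ?_
    · rw [map_add, LinearMap.add_apply, pull_add]
    · change pullL0 hφ (b (f • v) w) = pullL0 hφ f * pullL0 hφ (b v w)
      rw [map_smul, LinearMap.smul_apply, smul_eq_mul, pull_mul]
    · change |pullL0 hφ (b v w)| ≤ _
      rw [← pull_abs, ← pull_mul, mul_comm]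
      exact pull_mono hφ (hb v w)
  choose T hT hTb using step1
  have T_add : ∀ w w', T (w + w') = T w + T w' := fun w w' =>
    hpbM.ext habs (hTb (w + w')) (h := pullL0 hφ (pn ν w) + pullL0 hφ (pn ν w'))
      (fun u => by
        rw [add_mul]
        exact (habs.add_le _ _).trans (add_le_add (hTb w u) (hTb w' u)))
      fun v => by rw [LinearMap.add_apply, hT, hT, hT, map_add, pull_add]
  have T_smul : ∀ (f : L0 ν) w, T (f • w) = pullL0 hφ f • T w := fun f w =>
    hpbM.ext habs (hTb (f • w)) (h := |pullL0 hφ f| * pullL0 hφ (pn ν w))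
      (fun u => by
        rw [mul_assoc]
        exact (habs.smul _ _).le.trans (mul_le_mul_of_nonneg_left (hTb w u) (abs_nonneg _)))
      fun v => by rw [LinearMap.smul_apply, hT, hT, map_smul, smul_eq_mul, smul_eq_mul, pull_mul]
  have step2 : ∀ u, ∃ S : Np →ₗ[L0 μ] L0 μ, (∀ w, S (pbN w) = T w u) ∧
      ∀ z, |S z| ≤ pn μ u * pn μ z := by
    intro u
    refine hpbN.lift habs (AddMonoidHom.mk' (fun w => T w u) fun w w' => ?_)
      (fun f w => ?_) _ (hMp.nonneg u) fun w => ?_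
    · rw [T_add, LinearMap.add_apply]
    · change T (f • w) u = pullL0 hφ f • T w u
      rw [T_smul, LinearMap.smul_apply]
    · change |T w u| ≤ _
      rw [mul_comm]
      exact hTb w u
  choose S hS hSb using step2
  refine ⟨⟨⟨S, fun u u' => ?_⟩, fun f u => ?_⟩, fun v w => ?_, hSb⟩
  · refine hpbN.ext habs (hSb (u + u')) (h := pn μ u + pn μ u') (fun z => ?_) fun w => ?_
    · rw [add_mul]
      exact (habs.add_le _ _).trans (add_le_add (hSb u z) (hSb u' z))
    · rw [LinearMap.add_apply, hS, hS, hS, map_add]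
  · refine hpbN.ext habs (hSb (f • u)) (h := |f| * pn μ u) (fun z => ?_) fun w => ?_
    · rw [mul_assoc]
      exact (habs.smul _ _).le.trans (mul_le_mul_of_nonneg_left (hSb u z) (abs_nonneg _))
    · rw [RingHom.id_apply, LinearMap.smul_apply, hS, hS, map_smul]
  · exact (hS _ _).trans (hT _ _)

theorem piReps_nonempty (α : M ⊗[L0 ν] N) : (piReps ν α).Nonempty := by
  suffices H : ∃ (n : ℕ) (v : Fin n → M) (w : Fin n → N), α = ∑ i, v i ⊗ₜ[L0 ν] w i by
    obtain ⟨n, v, w, h⟩ := H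
    exact ⟨_, n, v, w, h, rfl⟩
  induction α using TensorProduct.induction_on with
  | zero => exact ⟨0, Fin.elim0, Fin.elim0, by simp⟩
  | tmul v w => exact ⟨1, fun _ => v, fun _ => w, by simp⟩
  | add α β hα hβ =>
    obtain ⟨n, v, w, rfl⟩ := hα
    obtain ⟨m, v', w', rfl⟩ := hβ
    refine ⟨n + m, Fin.append v v', Fin.append w w', ?_⟩
    simp [Fin.sum_univ_add]

/-- The algebraic map `ℳ ⊗ 𝒩 → φ*ℳ ⊗ φ*𝒩`, `v ⊗ w ↦ φ*v ⊗ φ*w`. -/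
theorem exists_tensor_map (hpbM : IsPullback μ ν φ hφ M Mp pbM)
    (hpbN : IsPullback μ ν φ hφ N Np pbN) :
    ∃ Ψ : M ⊗[L0 ν] N →+ Mp ⊗[L0 μ] Np,
      (∀ v w, Ψ (v ⊗ₜ[L0 ν] w) = pbM v ⊗ₜ[L0 μ] pbN w) ∧
      ∀ (f : L0 ν) α, Ψ (f • α) = pullL0 hφ f • Ψ α := by
  let b : M →+ N →+ Mp ⊗[L0 μ] Np :=
    AddMonoidHom.mk' (fun v => AddMonoidHom.mk' (fun w => pbM v ⊗ₜ[L0 μ] pbN w) fun w w' => by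
      rw [hpbN.add, TensorProduct.tmul_add]) fun v v' => by
        ext w
        change pbM (v + v') ⊗ₜ[L0 μ] pbN w = pbM v ⊗ₜ[L0 μ] pbN w + pbM v' ⊗ₜ[L0 μ] pbN w
        rw [hpbM.add, TensorProduct.add_tmul]
  refine ⟨TensorProduct.liftAddHom b fun f v w => ?_, fun v w => rfl, fun f α => ?_⟩
  · change pbM (f • v) ⊗ₜ[L0 μ] pbN w = pbM v ⊗ₜ[L0 μ] pbN (f • w)
    rw [hpbM.smul, hpbN.smul, TensorProduct.smul_tmul]
  · induction α using TensorProduct.induction_on with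
    | zero => rw [smul_zero, map_zero, smul_zero]
    | tmul v w =>
      change pbM (f • v) ⊗ₜ[L0 μ] pbN w = pullL0 hφ f • (pbM v ⊗ₜ[L0 μ] pbN w)
      rw [hpbM.smul, TensorProduct.smul_tmul']
    | add α β hα hβ => rw [smul_add, map_add, hα, hβ, map_add, smul_add]

variable {P : Type*} [AddCommGroup P] [Module (L0 ν) P] [BanachMod ν P]
  {eP : M ⊗[L0 ν] N →ₗ[L0 ν] P}
  {Q : Type*} [AddCommGroup Q] [Module (L0 μ) Q] [BanachMod μ Q]
  {eQ : Mp ⊗[L0 μ] Np →ₗ[L0 μ] Q}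

theorem IsPiTensor.pn_tmul_le (hP : IsPiTensor ν M N P eP) (v : M) (w : N) :
    pn ν (eP (v ⊗ₜ[L0 ν] w)) ≤ pn ν v * pn ν w :=
  (hP.pn_emb _).1 ⟨1, fun _ => v, fun _ => w, by simp, by simp⟩

/-- The map `v ⊗ w ↦ φ*v ⊗ φ*w` preserves the projective pointwise norm, up to composition with
`φ`. The inequality `≤` holds since representations are mapped to representations and composition
with `φ` commutes with infima. For `≥`, a functional norming `α` induces a bounded bilinear form,
whose extension to the pullbacks is a functional on the target bounded by the projective norm. -/
theorem pn_tensor_map (hpbM : IsPullback μ ν φ hφ M Mp pbM)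
    (hpbN : IsPullback μ ν φ hφ N Np pbN) (hP : IsPiTensor ν M N P eP)
    (hQ : IsPiTensor μ Mp Np Q eQ) (Ψ : M ⊗[L0 ν] N →+ Mp ⊗[L0 μ] Np)
    (hΨ : ∀ v w, Ψ (v ⊗ₜ[L0 ν] w) = pbM v ⊗ₜ[L0 μ] pbN w) (α : M ⊗[L0 ν] N) :
    pn μ (eQ (Ψ α)) = pullL0 hφ (pn ν (eP α)) := by
  have hPn : IsPN ν (pn ν : P → L0 ν) := isPN_pn
  have habs : IsPN μ (fun f : L0 μ => |f|) := isPN_abs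
  refine le_antisymm ?_ ?_
  · refine le_pull_of_isGLB hφ (piReps_nonempty α) (hP.pn_emb α) ?_
    rintro _ ⟨n, v, w, rfl, rfl⟩
    refine (hQ.pn_emb _).1 ⟨n, fun i => pbM (v i), fun i => pbN (w i), ?_, ?_⟩
    · simp [map_sum, hΨ]
    · change pullHom hφ _ = _
      rw [map_sum]
      refine Finset.sum_congr rfl fun i _ => ?_
      rw [map_mul, hpbM.pnorm, hpbN.pnorm]
      rfl
  · obtain ⟨ω, hω, hωb⟩ := hahn_banach hPn.nonneg hPn.add_le hPn.smul (eP α)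
    obtain ⟨B, hB, hBb⟩ := exists_bilinear_extension hpbM hpbN
      (TensorProduct.curry (ω ∘ₗ eP)) fun v w => (hωb _).trans (hP.pn_tmul_le v w)
    have hF : ∀ β, TensorProduct.lift B (Ψ β) = pullL0 hφ (ω (eP β)) := by
      intro β
      induction β using TensorProduct.induction_on with
      | zero => rw [map_zero, map_zero, map_zero, map_zero, pull_zero]
      | tmul v w => rw [hΨ, TensorProduct.lift.tmul, hB]; rfl
      | add β γ hβ hγ => rw [map_add, map_add, hβ, hγ, map_add, map_add, pull_add]
    rw [← hω, ← hF]
    refine (le_abs_self _).trans ((hQ.pn_emb _).2 ?_)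
    rintro _ ⟨n, u, z, h, rfl⟩
    rw [h, map_sum]
    refine (habs.sum_le _ _).trans (Finset.sum_le_sum fun i _ => ?_)
    rw [TensorProduct.lift.tmul]
    exact hBb _ _

/-- If `u` and `z` lie in the generated submodules, so does `u ⊗ z`. -/
theorem tmul_mem_span {D : Set Q} (hD : ∀ v w, eQ (pbM v ⊗ₜ[L0 μ] pbN w) ∈ D) {u : Mp} {z : Np}
    (hu : u ∈ Submodule.span (L0 μ) (Set.range pbM))
    (hz : z ∈ Submodule.span (L0 μ) (Set.range pbN)) :
    eQ (u ⊗ₜ[L0 μ] z) ∈ Submodule.span (L0 μ) D := by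
  induction hu using Submodule.span_induction with
  | mem u hu =>
    obtain ⟨v, rfl⟩ := hu
    induction hz using Submodule.span_induction with
    | mem z hz =>
      obtain ⟨w, rfl⟩ := hz
      exact Submodule.subset_span (hD v w)
    | zero => rw [TensorProduct.tmul_zero, map_zero]; exact Submodule.zero_mem _
    | add z z' _ _ h h' =>
      rw [TensorProduct.tmul_add, map_add]; exact Submodule.add_mem _ h h'
    | smul f z _ h =>
      rw [TensorProduct.tmul_smul, map_smul]; exact Submodule.smul_mem _ _ h
  | zero => rw [TensorProduct.zero_tmul, map_zero]; exact Submodule.zero_mem _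
  | add u u' _ _ h h' =>
    rw [TensorProduct.add_tmul, map_add]; exact Submodule.add_mem _ h h'
  | smul f u _ h =>
    rw [← TensorProduct.smul_tmul', map_smul]; exact Submodule.smul_mem _ _ h

/-- The pure tensors of pulled back elements generate the projective tensor product. -/
theorem dense_span_tensor (hpbM : IsPullback μ ν φ hφ M Mp pbM)
    (hpbN : IsPullback μ ν φ hφ N Np pbN) (hQ : IsPiTensor μ Mp Np Q eQ) {D : Set Q}
    (hD : ∀ v w, eQ (pbM v ⊗ₜ[L0 μ] pbN w) ∈ D) (q : Q) (ε : ℝ) (hε : 0 < ε) :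
    ∃ y ∈ Submodule.span (L0 μ) D, dM μ y q < ε := by
  have hMp : IsPN μ (pn μ : Mp → L0 μ) := isPN_pn
  have hNp : IsPN μ (pn μ : Np → L0 μ) := isPN_pn
  have hQn : IsPN μ (pn μ : Q → L0 μ) := isPN_pn
  have halg : ∀ γ : Mp ⊗[L0 μ] Np, ∀ ε : ℝ, 0 < ε →
      ∃ y ∈ Submodule.span (L0 μ) D, dM μ y (eQ γ) < ε := by
    intro γ
    induction γ using TensorProduct.induction_on with
    | zero =>
      intro ε hε
      refine ⟨0, Submodule.zero_mem _, ?_⟩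
      simpa [dM, dL0_zero_eq, map_zero, hQn.zero] using
        (show dL0 μ (0 : L0 μ) 0 < ε by simpa [dL0] using hε)
    | tmul u z =>
      intro ε hε
      obtain ⟨a, ha⟩ := hpbM.exists_seq u
      obtain ⟨c, hc⟩ := hpbN.exists_seq z
      set a' := fun n => Finsupp.linearCombination (L0 μ) pbM (a n)
      set c' := fun n => Finsupp.linearCombination (L0 μ) pbN (c n)
      have hle : ∀ n, pn μ (eQ (a' n ⊗ₜ[L0 μ] c' n) - eQ (u ⊗ₜ[L0 μ] z))
          ≤ pn μ (a' n - u) * pn μ (c' n - z) + pn μ z * pn μ (a' n - u)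
            + pn μ u * pn μ (c' n - z) := by
        intro n
        have e : eQ (a' n ⊗ₜ[L0 μ] c' n) - eQ (u ⊗ₜ[L0 μ] z)
            = eQ ((a' n - u) ⊗ₜ[L0 μ] (c' n - z)) + eQ ((a' n - u) ⊗ₜ[L0 μ] z)
              + eQ (u ⊗ₜ[L0 μ] (c' n - z)) := by
          rw [← map_sub, ← map_add, ← map_add]
          congr 1
          simp only [TensorProduct.sub_tmul, TensorProduct.tmul_sub]
          abel
        rw [e, mul_comm (pn μ z)]
        exact (hQn.add_le _ _).trans (add_le_add ((hQn.add_le _ _).trans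
          (add_le_add (hQ.pn_tmul_le _ _) (hQ.pn_tmul_le _ _))) (hQ.pn_tmul_le _ _))
      have hTZ : TZ μ fun n => pn μ (eQ (a' n ⊗ₜ[L0 μ] c' n) - eQ (u ⊗ₜ[L0 μ] z)) :=
        (((ha.mul hc).add (ha.const_mul _)).add (hc.const_mul _)).squeeze
          (fun n => hQn.nonneg _) hle
      obtain ⟨n, hn⟩ := ((dL0_tendsto_of_TZ hTZ).eventually_lt_const hε).exists
      refine ⟨_, tmul_mem_span hD ?_ ?_, hn⟩
      · rw [← Finsupp.range_linearCombination]; exact ⟨a n, rfl⟩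
      · rw [← Finsupp.range_linearCombination]; exact ⟨c n, rfl⟩
    | add γ δ hγ hδ =>
      intro ε hε
      obtain ⟨y, hy, hyγ⟩ := hγ (ε / 2) (half_pos hε)
      obtain ⟨y', hy', hyδ⟩ := hδ (ε / 2) (half_pos hε)
      refine ⟨y + y', Submodule.add_mem _ hy hy', ?_⟩
      have := dL0_add_le (hQn.nonneg (y + y' - eQ (γ + δ)))
        (g := pn μ (y - eQ γ)) (h := pn μ (y' - eQ δ)) (by
          rw [map_add, show y + y' - (eQ γ + eQ δ) = (y - eQ γ) + (y' - eQ δ) by abel]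
          exact hQn.add_le _ _)
      unfold dM at *
      linarith
  obtain ⟨γ, hγ⟩ := hQ.dense q (ε / 2) (half_pos hε)
  obtain ⟨y, hy, hyγ⟩ := halg γ (ε / 2) (half_pos hε)
  refine ⟨y, hy, ?_⟩
  have := dL0_add_le (hQn.nonneg (y - q)) (hQn.tri y (eQ γ) q)
  unfold dM at *
  linarith

end Tensor

/-- Let `𝕏`, `𝕐` be separable σ-finite measure spaces and `φ : X → Y`
measurable with `φ_# 𝔪_X ≪ 𝔪_Y`. Let `ℳ`, `𝒩` be Banach `L⁰(𝕐)`-modules. Then there is a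
unique homomorphism `φ* : ℳ ⊗̂_π 𝒩 → (φ*ℳ) ⊗̂_π (φ*𝒩)` with
`φ*(v ⊗ w) = (φ*v) ⊗ (φ*w)`; it satisfies `|φ* α| = |α| ∘ φ` and its image generates the
target, so that the projective tensor product of the pullbacks, together with `φ*`, is a
realization of the pullback of the projective tensor product. Here `P` realizes the projective
tensor product of `ℳ` and `𝒩` over `𝕐`, while `Q` realizes that of the pullbacks `Mp`,
`Np` over `𝕏`. -/
theorem pullback_commutes_with_projective_tensor
    {Y : Type*} [MeasurableSpace Y] (μ : Measure X) [SigmaFinite μ]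
    (ν : Measure Y) [SigmaFinite ν] (hμsep : MeasSeparable μ) (hνsep : MeasSeparable ν)
    (φ : X → Y) (hφ : Measure.QuasiMeasurePreserving φ μ ν)
    (M : Type*) [AddCommGroup M] [Module (L0 ν) M] [BanachMod ν M]
    (N : Type*) [AddCommGroup N] [Module (L0 ν) N] [BanachMod ν N]
    (Mp : Type*) [AddCommGroup Mp] [Module (L0 μ) Mp] [BanachMod μ Mp]
    (Np : Type*) [AddCommGroup Np] [Module (L0 μ) Np] [BanachMod μ Np]
    (pbM : M → Mp) (hpbM : IsPullback μ ν φ hφ M Mp pbM)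
    (pbN : N → Np) (hpbN : IsPullback μ ν φ hφ N Np pbN)
    (P : Type*) [AddCommGroup P] [Module (L0 ν) P] [BanachMod ν P]
    (eP : M ⊗[L0 ν] N →ₗ[L0 ν] P) (hP : IsPiTensor ν M N P eP)
    (Q : Type*) [AddCommGroup Q] [Module (L0 μ) Q] [BanachMod μ Q]
    (eQ : Mp ⊗[L0 μ] Np →ₗ[L0 μ] Q) (hQ : IsPiTensor μ Mp Np Q eQ) :
    ∃ Φ : P → Q,
      ((∀ p q : P, Φ (p + q) = Φ p + Φ q)
        ∧ (∀ (f : L0 ν) (p : P), Φ (f • p) = pullL0 hφ f • Φ p)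
        ∧ (∃ g : L0 μ, 0 ≤ g ∧ ∀ p : P, pn μ (Φ p) ≤ g * pullL0 hφ (pn ν p))
        ∧ (∀ (v : M) (w : N), Φ (eP (v ⊗ₜ[L0 ν] w)) = eQ (pbM v ⊗ₜ[L0 μ] pbN w)))
      ∧ (∀ Φ' : P → Q,
          ((∀ p q : P, Φ' (p + q) = Φ' p + Φ' q)
            ∧ (∀ (f : L0 ν) (p : P), Φ' (f • p) = pullL0 hφ f • Φ' p)
            ∧ (∃ g : L0 μ, 0 ≤ g ∧ ∀ p : P, pn μ (Φ' p) ≤ g * pullL0 hφ (pn ν p))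
            ∧ (∀ (v : M) (w : N), Φ' (eP (v ⊗ₜ[L0 ν] w)) = eQ (pbM v ⊗ₜ[L0 μ] pbN w))) →
          Φ' = Φ)
      ∧ (∀ p : P, pn μ (Φ p) = pullL0 hφ (pn ν p))
      ∧ IsPullback μ ν φ hφ P Q Φ := by
  have hPn : IsPN ν (pn ν : P → L0 ν) := isPN_pn
  have hQn : IsPN μ (pn μ : Q → L0 μ) := isPN_pn
  obtain ⟨Ψ, hΨ, hΨs⟩ := exists_tensor_map hpbM hpbN
  have hΨn := pn_tensor_map hpbM hpbN hP hQ Ψ hΨ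
  have hseq : ∀ u : P, ∃ β : ℕ → M ⊗[L0 ν] N,
      TZ μ (fun n => pullL0 hφ (pn ν (eP (β n) - u))) := fun u => by
    obtain ⟨β, hβ⟩ := exists_seq_TZ (F := eP) (hP.dense u)
    exact ⟨β, hβ.pull hφ⟩
  obtain ⟨Φ, hΦ, hΦb⟩ := exists_extension hQn (a := fun u : P => pullL0 hφ (pn ν u))
    (by rw [hPn.zero, pull_zero]) (fun u => by rw [hPn.neg])
    (fun u v => by rw [← pull_add]; exact pull_mono hφ (hPn.add_le _ _))
    eP.toAddMonoidHom hseq (eQ.toAddMonoidHom.comp Ψ) (fun β => (hΨn β).le)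
  replace hΦ : ∀ β, Φ (eP β) = eQ (Ψ β) := hΦ
  have hpure : ∀ v w, Φ (eP (v ⊗ₜ[L0 ν] w)) = eQ (pbM v ⊗ₜ[L0 μ] pbN w) := fun v w => by
    rw [hΦ, hΨ]
  have hsmul : ∀ (f : L0 ν) (u : P), Φ (f • u) = pullL0 hφ f • Φ u := by
    intro f u
    have := eq_zero_of_dense hQn (a := fun u : P => pullL0 hφ (pn ν u)) eP hseq
      (Φ.comp (DistribSMul.toAddMonoidHom P f)
        - (DistribSMul.toAddMonoidHom Q (pullL0 hφ f)).comp Φ)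
      (2 * |pullL0 hφ f|) (fun u => by
        change pn μ (Φ (f • u) - pullL0 hφ f • Φ u) ≤ _
        have h1 := hΦb (f • u)
        rw [hPn.smul, pull_mul, pull_abs] at h1
        have h2 : pn μ (pullL0 hφ f • Φ u) ≤ |pullL0 hφ f| * pullL0 hφ (pn ν u) := by
          rw [hQn.smul]; exact mul_le_mul_of_nonneg_left (hΦb u) (abs_nonneg _)
        exact (hQn.sub_le _ _).trans ((add_le_add h1 h2).trans (le_of_eq (by ring))))
      (fun β => by
        change Φ (f • eP β) - pullL0 hφ f • Φ (eP β) = 0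
        rw [← map_smul, hΦ, hΦ, hΨs, map_smul, sub_self])
    exact sub_eq_zero.1 (DFunLike.congr_fun this u)
  have hnorm : ∀ u : P, pn μ (Φ u) = pullL0 hφ (pn ν u) := by
    intro u
    refine le_antisymm (hΦb u) ?_
    obtain ⟨β, hβ⟩ := hseq u
    refine le_of_TZ (hβ.add hβ) fun n => ?_
    have h1 : pullL0 hφ (pn ν u)
        ≤ pullL0 hφ (pn ν (eP (β n))) + pullL0 hφ (pn ν (eP (β n) - u)) := by
      rw [← pull_add, hPn.sub_comm]; exact pull_mono hφ (hPn.le_add_sub _ _)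
    have h2 : pullL0 hφ (pn ν (eP (β n)))
        ≤ pn μ (Φ u) + pullL0 hφ (pn ν (eP (β n) - u)) := by
      rw [← hΨn, ← hΦ]
      refine (hQn.le_add_sub _ (Φ u)).trans (add_le_add le_rfl ?_)
      rw [← map_sub]; exact hΦb _
    rw [← add_assoc]
    exact h1.trans (add_le_add h2 le_rfl)
  refine ⟨Φ, ⟨Φ.map_add, hsmul, ⟨1, zero_le_one, fun u => by rw [one_mul]; exact hΦb u⟩, hpure⟩,
    ?_, hnorm, Φ.map_add, hsmul, hnorm, ?_⟩
  · rintro Φ' ⟨hadd', -, ⟨g, -, hg⟩, hpure'⟩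
    have hdiff : ∀ β, Φ' (eP β) - Φ (eP β) = 0 := by
      intro β
      change (AddMonoidHom.mk' Φ' hadd' - Φ) (eP β) = 0
      induction β using TensorProduct.induction_on with
      | zero => rw [map_zero, map_zero]
      | tmul v w =>
        change Φ' (eP (v ⊗ₜ[L0 ν] w)) - Φ (eP (v ⊗ₜ[L0 ν] w)) = 0
        rw [hpure, hpure', sub_self]
      | add β γ hβ hγ => rw [map_add, map_add, hβ, hγ, add_zero]
    have := eq_zero_of_dense hQn (a := fun u : P => pullL0 hφ (pn ν u)) eP hseq
      (AddMonoidHom.mk' Φ' hadd' - Φ) (g + 1) (fun u => by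
        rw [add_mul, one_mul]
        exact (hQn.sub_le _ _).trans (add_le_add (hg u) (hΦb u))) hdiff
    funext u
    exact sub_eq_zero.1 (DFunLike.congr_fun this u)
  · exact dense_span_tensor hpbM hpbN hQ fun v w => ⟨_, hpure v w⟩

end Paper
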